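/- arXiv:1608.03014 — 3 statements merged into one kernel-verified Lean document; each statement's English description precedes it below -/
import Mathlib

section
/- Suppose p = 2 and q is a power of 2. For every positive integer k with k ≡ 0 (mod q−1), the sum ∑_{P ∈ P_1} 1/(P^k − 1), which converges in K̂ = F_q((T^{-1})), lies in K = F_q(T). -/
/-!
Write `e₁, e₂, …` for the elementary symmetric functions of a (possibly infinite, convergent)
family and put `φ a = a^(-k)` with `k = (q - 1) m`. The proof compares two descriptions of
`e₂ / e₁²` for the family of all `φ a`, `a` monic.

*Euler product.* In characteristic two the ratio `e₂ / e₁²` is additive over products of families: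
`e₂(f ⊗ g) = e₂(f) e₁(g)² + p₂(f) e₂(g)`, and `p₂(f) = e₁(f)²`. For the geometric family
`1, u, u², …` the ratio is `u / (1 - u)`. Since the monic polynomials are the products of powers of
monic irreducibles, `e₂ / e₁²` equals `∑ φ P / (1 - φ P) = ∑ 1 / (P^k - 1)` (`exists_smooth` for
finitely many primes with truncated exponents, `ES_two_eq` in the limit).

*Carlitz.* For `x a = a^(-(q-1))` the symmetric functions of `x` over the monic `a` of degree `< d`
are, up to a common factor, the coefficients of the Carlitz polynomial `E_d`, where
`z E_d(z^(q-1)) = ∏ (z - a)` over all `a` of degree `< d`. The functional equation of `E_d` under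
`z ↦ T z` gives a recursion (`ES_recursion`) that in the limit `d → ∞` shows
`e_j(x) ∈ e₁(x)^j K` (`exists_period`). As `e₁(φ) = p_m(x)` and `e₂(φ) = e₂(x^m)` are universal
integer polynomials in the `e_j(x)` (`exists_universal`), applying them to the rescaled family
`x / e₁(x)`, whose symmetric functions lie in `K`, shows that `e₂(φ) / e₁(φ)²` lies in `K`. The
divisions make sense because `e₁(x)` and `e₁(φ)` are units of `F[[T⁻¹]]`: the term `a = 1` dominates.
-/

open Polynomial

/-- The element `T` inside the field of formal Laurent series in `T⁻¹`
(`LaurentSeries F` with variable `X = T⁻¹`, so `T` is `X⁻¹ = single (-1) 1`). -/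
noncomputable def TT (F : Type) [Field F] : LaurentSeries F := HahnSeries.single (-1) 1

/-- The embedding of `F[T]` into `K̂ = F((T⁻¹))`. -/
noncomputable def polyEmb (F : Type) [Field F] : Polynomial F →+* LaurentSeries F :=
  Polynomial.eval₂RingHom HahnSeries.C (TT F)

/-! ### The valuation topology on `F((T⁻¹))` -/

namespace Thakur

open WithZero Filter Topology

/-- The `T⁻¹`-adic valuation on `F((T⁻¹))`, normalised by `v T = exp 1`. -/
noncomputable abbrev vL (F : Type) [Field F] :
    Valuation (LaurentSeries F) (WithZero (Multiplicative ℤ)) := Valued.v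

section Topo

variable {F : Type} [Field F]

lemma v_polyEmb {a : F[X]} (ha : a ≠ 0) : vL F (polyEmb F a) = exp (a.natDegree : ℤ) := by
  have hT : vL F (TT F) = exp 1 := by
    simpa [TT] using LaurentSeries.valuation_single_zpow F (-1)
  have htriv : (vL F).IsTrivialOn F := by
    refine ⟨fun c hc => ?_⟩
    have hle : ∀ c : F, vL F (algebraMap F (LaurentSeries F) c) ≤ 1 := by
      intro c
      rw [LaurentSeries.val_le_one_iff_eq_coe]
      exact ⟨PowerSeries.C c, by simp [LaurentSeries.algebraMap_apply]⟩
    refine le_antisymm (hle c) ?_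
    have h1 : vL F (algebraMap F (LaurentSeries F) c) * vL F (algebraMap F (LaurentSeries F) c⁻¹)
        = 1 := by
      rw [← map_mul, ← map_mul, mul_inv_cancel₀ hc]; simp
    calc (1 : WithZero (Multiplicative ℤ)) = _ := h1.symm
      _ ≤ vL F (algebraMap F (LaurentSeries F) c) * 1 := by gcongr; exact hle _
      _ = _ := mul_one _
  have h2 : polyEmb F a = aeval (TT F) a := by
    have h3 : algebraMap F (LaurentSeries F) = HahnSeries.C :=
      RingHom.ext (LaurentSeries.algebraMap_apply F)
    rw [aeval_def, h3]
    rfl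
  rw [h2, valuation_aeval_eq_valuation_X_pow_natDegree_of_one_lt_valuation_X (TT F) _ ha, hT,
    ← exp_nsmul]
  · simp
  · rw [hT, ← exp_zero, exp_lt_exp]; norm_num

lemma polyEmb_injective : Function.Injective (polyEmb F) := by
  rw [injective_iff_map_eq_zero]
  intro a h
  by_contra ha
  have := v_polyEmb ha
  rw [h, map_zero] at this
  exact exp_ne_zero this.symm

instance : NonarchimedeanAddGroup (LaurentSeries F) where
  is_nonarchimedean U hU := by
    obtain ⟨γ, hγ⟩ := Valued.mem_nhds_zero.1 hU
    exact ⟨⟨(vL F).restrict.ltAddSubgroup γ, Valued.isOpen_ball (LaurentSeries F) _⟩, hγ⟩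

lemma tendsto_zero_of_v {ι : Type} {l : Filter ι} {u : ι → LaurentSeries F}
    (h : ∀ n : ℕ, ∀ᶠ i in l, vL F (u i) ≤ exp (-(n : ℤ))) : Tendsto u l (𝓝 0) := by
  intro U hU
  obtain ⟨γ, hγ⟩ := Valued.mem_nhds_zero.1 hU
  have hne : MonoidWithZeroHom.ValueGroup₀.embedding
      (γ : MonoidWithZeroHom.ValueGroup₀ (.ofClass (vL F))) ≠ 0 := by
    simp
  obtain ⟨k, hk⟩ : ∃ k : ℤ, MonoidWithZeroHom.ValueGroup₀.embedding
      (γ : MonoidWithZeroHom.ValueGroup₀ (.ofClass (vL F))) = exp k :=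
    ⟨_, (exp_log hne).symm⟩
  rw [Filter.mem_map]
  filter_upwards [h (k.natAbs + 1)] with i hi
  refine hγ ?_
  change (vL F).restrict (u i) < γ
  rw [Valuation.restrict_lt_iff_lt_embedding, hk]
  refine hi.trans_lt ?_
  rw [exp_lt_exp]
  push_cast
  have := neg_abs_le k
  omega

lemma ne_zero_of_tendsto {u : ℕ → LaurentSeries F} {a : LaurentSeries F}
    (h : Tendsto u atTop (𝓝 a)) (h1 : ∀ᶠ n in atTop, vL F (u n) = 1) : a ≠ 0 := by
  rintro rfl
  have h2 : {y | (vL F).restrict y < 1} ∈ 𝓝 (0 : LaurentSeries F) :=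
    Valued.mem_nhds_zero.2 ⟨1, fun y hy => by simpa using hy⟩
  obtain ⟨n, h3, h4⟩ := ((h.eventually h2).and h1).exists
  have h5 : (vL F).restrict (u n) < 1 := h3
  rw [Valuation.restrict_lt_one_iff, h4] at h5
  exact lt_irrefl _ h5

/-- In a complete nonarchimedean field, a sequence with rapidly decreasing increments converges. -/
lemma exists_limit {u : ℕ → LaurentSeries F}
    (h : ∀ n : ℕ, vL F (u (n + 1) - u n) ≤ exp (-(n : ℤ))) :
    ∃ a, Tendsto u atTop (𝓝 a) := by
  have h0 : Tendsto (fun n => u (n + 1) - u n) cofinite (𝓝 0) := by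
    rw [Nat.cofinite_eq_atTop]
    refine tendsto_zero_of_v fun n => ?_
    filter_upwards [eventually_ge_atTop n] with i hi
    refine (h i).trans ?_
    rw [exp_le_exp]; omega
  have hs := (NonarchimedeanAddGroup.summable_of_tendsto_cofinite_zero h0).hasSum.tendsto_sum_nat
  simp only [Finset.sum_range_sub] at hs
  refine ⟨_, (hs.add_const (u 0)).congr fun n => by ring⟩

end Topo

end Thakur

/-! ### Elementary symmetric functions of a finite family -/

namespace Thakur

open WithZero Filter Topology

/-- `ES j s f` is the `j`-th elementary symmetric function of the family `(f i)`, `i ∈ s`. -/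
def ES {ι R : Type} [CommRing R] (j : ℕ) (s : Finset ι) (f : ι → R) : R :=
  ∑ t ∈ s.powersetCard j, ∏ i ∈ t, f i

section Symm

variable {ι κ R : Type} [CommRing R]

lemma ES_zero (s : Finset ι) (f : ι → R) : ES 0 s f = 1 := by simp [ES]

lemma ES_one (s : Finset ι) (f : ι → R) : ES 1 s f = ∑ i ∈ s, f i := by
  simp [ES, Finset.powersetCard_one]

lemma ES_empty (j : ℕ) (f : ι → R) : ES (j + 1) ∅ f = 0 := by
  unfold ES
  rw [Finset.powersetCard_eq_empty.2 (by simp), Finset.sum_empty]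

lemma ES_insert [DecidableEq ι] (j : ℕ) {a : ι} {s : Finset ι} (ha : a ∉ s) (f : ι → R) :
    ES (j + 1) (insert a s) f = ES (j + 1) s f + f a * ES j s f := by
  unfold ES
  rw [Finset.powersetCard_succ_insert ha, Finset.sum_union, Finset.sum_image, Finset.mul_sum]
  · congr 1
    refine Finset.sum_congr rfl fun t ht => Finset.prod_insert fun h => ?_
    exact ha ((Finset.mem_powersetCard.1 ht).1 h)
  · intro t ht t' ht' h
    have h1 : a ∉ t := fun h => ha ((Finset.mem_powersetCard.1 ht).1 h)
    have h2 : a ∉ t' := fun h => ha ((Finset.mem_powersetCard.1 ht').1 h)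
    rw [← Finset.erase_insert h1, ← Finset.erase_insert h2, h]
  · rw [Finset.disjoint_left]
    intro t ht ht'
    obtain ⟨u, -, rfl⟩ := Finset.mem_image.1 ht'
    exact ha ((Finset.mem_powersetCard.1 ht).1 (Finset.mem_insert_self _ _))

lemma ES_congr (j : ℕ) {s : Finset ι} {f g : ι → R} (h : ∀ i ∈ s, f i = g i) :
    ES j s f = ES j s g := by
  unfold ES
  refine Finset.sum_congr rfl fun t ht => Finset.prod_congr rfl fun i hi => h i ?_
  exact (Finset.mem_powersetCard.1 ht).1 hi

lemma ES_map (j : ℕ) (s : Finset ι) (e : ι ↪ κ) (f : κ → R) :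
    ES j (s.map e) f = ES j s (fun i => f (e i)) := by
  unfold ES
  rw [Finset.powersetCard_map, Finset.sum_map]
  simp

lemma ES_smul (j : ℕ) (s : Finset ι) (c : R) (f : ι → R) :
    ES j s (fun i => c * f i) = c ^ j * ES j s f := by
  unfold ES
  rw [Finset.mul_sum]
  refine Finset.sum_congr rfl fun t ht => ?_
  rw [Finset.prod_mul_distrib, Finset.prod_const, (Finset.mem_powersetCard.1 ht).2]

lemma ES_image [DecidableEq κ] (j : ℕ) (s : Finset ι) (e : ι → κ) (he : Set.InjOn e s)
    (f : κ → R) : ES j (s.image e) f = ES j s (fun i => f (e i)) := by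
  classical
  induction s using Finset.induction_on generalizing j with
  | empty => cases j <;> simp [ES_zero, ES_empty]
  | insert a s ha ih =>
    have h1 := he.mono (show (s : Set ι) ⊆ (insert a s : Finset ι) by simp)
    cases j with
    | zero => simp [ES_zero]
    | succ j =>
      rw [Finset.image_insert, ES_insert, ES_insert _ ha, ih _ h1, ih _ h1]
      intro h
      obtain ⟨b, hb, hba⟩ := Finset.mem_image.1 h
      exact ha (he (by simp [hb]) (by simp) hba ▸ hb)

lemma ES_attach (j : ℕ) (s : Finset ι) (f : ι → R) :
    ES j (Finset.univ : Finset s) (fun i => f i) = ES j s f := by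
  have := ES_map j (Finset.univ : Finset s) (Function.Embedding.subtype _) f
  rw [← Finset.attach_eq_univ, Finset.attach_map_val, Finset.attach_eq_univ] at this
  exact this.symm

lemma ES_two_union [DecidableEq ι] {s t : Finset ι} (h : Disjoint s t) (f : ι → R) :
    ES 2 (s ∪ t) f = ES 2 s f + ES 2 t f + (∑ i ∈ s, f i) * ∑ i ∈ t, f i := by
  induction s using Finset.induction_on with
  | empty => simp [ES_empty]
  | insert a s ha ih =>
    rw [Finset.disjoint_insert_left] at h
    rw [Finset.insert_union, ES_insert 1 (by simp [ha, h.1]), ES_insert 1 ha, ih h.2, ES_one,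
      ES_one, Finset.sum_union h.2, Finset.sum_insert ha]
    ring

/-- The second elementary symmetric function of a product family `(f i * g j)`. -/
lemma ES_two_product [DecidableEq ι] [DecidableEq κ] (s : Finset ι) (t : Finset κ)
    (f : ι → R) (g : κ → R) :
    ES 2 (s ×ˢ t) (fun x => f x.1 * g x.2) =
      ES 2 s f * (∑ j ∈ t, g j) ^ 2 + (∑ i ∈ s, f i ^ 2) * ES 2 t g := by
  induction s using Finset.induction_on with
  | empty => simp [ES_empty]
  | insert a s ha ih =>
    have h1 : (insert a s) ×ˢ t = t.image (fun j => (a, j)) ∪ s ×ˢ t := by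
      ext ⟨i, j⟩; simp; grind
    have h2 : Disjoint (t.image (fun j => (a, j))) (s ×ˢ t) := by
      rw [Finset.disjoint_left]; rintro ⟨i, j⟩; simp; grind
    have h3 : Set.InjOn (fun j => (a, j)) (t : Set κ) := fun _ _ _ _ h => by simpa using h
    rw [h1, ES_two_union h2, ES_image _ _ _ h3, ih, ES_insert 1 ha, ES_one, Finset.sum_insert ha,
      Finset.sum_image h3, Finset.sum_product]
    simp only [ES_smul, ← Finset.mul_sum, ← Finset.sum_mul]
    ring

/-- The generating polynomial of the elementary symmetric functions. -/
lemma coeff_prod_one_add (s : Finset ι) (f : ι → R) (j : ℕ) :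
    (∏ i ∈ s, (1 + C (f i) * X)).coeff j = ES j s f := by
  classical
  induction s using Finset.induction_on generalizing j with
  | empty => cases j <;> simp [ES_zero, ES_empty, coeff_one]
  | insert a s ha ih =>
    rw [Finset.prod_insert ha, add_mul, one_mul, mul_assoc, coeff_add, coeff_C_mul]
    cases j with
    | zero => simp [ih, ES_zero]
    | succ j => rw [coeff_X_mul, ih, ih, ES_insert _ ha]

lemma aeval_esymm_eq_ES [Fintype ι] (n : ℕ) (f : ι → R) :
    MvPolynomial.aeval f (MvPolynomial.esymm ι ℤ n) = ES n Finset.univ f := by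
  rw [MvPolynomial.aeval_esymm_eq_multiset_esymm, Finset.esymm_map_val, ES]

/-- Newton's identities: for `n ≤ N` the power sum `pₙ` is a universal integer polynomial in
`e₁, …, e_N`, the same for all numbers of variables. -/
lemma exists_newton (N : ℕ) (n : ℕ) (hn : 0 < n) (hnN : n ≤ N) :
    ∃ Q : MvPolynomial (Fin N) ℤ, ∀ (σ : Type) [Fintype σ],
      MvPolynomial.psum σ ℤ n =
        MvPolynomial.aeval (fun i : Fin N => MvPolynomial.esymm σ ℤ (i + 1)) Q := by
  induction n using Nat.strong_induction_on with
  | _ n ih =>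
    choose! Q hQ using ih
    let e : ℕ → MvPolynomial (Fin N) ℤ := fun j =>
      if h : j - 1 < N then MvPolynomial.X ⟨j - 1, h⟩ else 0
    have he : ∀ (σ : Type) [Fintype σ] (j : ℕ), 0 < j → j ≤ N →
        MvPolynomial.aeval (fun i : Fin N => MvPolynomial.esymm σ ℤ (i + 1)) (e j) =
          MvPolynomial.esymm σ ℤ j := by
      intro σ _ j h0 hj
      have h1 : j - 1 < N := by omega
      simp only [e, h1, dif_pos, MvPolynomial.aeval_X]
      congr 1; omega
    refine ⟨(-1) ^ (n + 1) * n * e n -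
      ∑ a ∈ Finset.HasAntidiagonal.antidiagonal n with a.1 ∈ Set.Ioo 0 n,
        (-1) ^ a.1 * e a.1 * Q a.2, ?_⟩
    intro σ _
    rw [MvPolynomial.psum_eq_mul_esymm_sub_sum σ ℤ n hn, map_sub, map_sum, map_mul, he σ n hn hnN]
    congr 1
    · simp
    · refine Finset.sum_congr rfl fun a ha => ?_
      rw [Finset.mem_filter, Finset.HasAntidiagonal.mem_antidiagonal, Set.mem_Ioo] at ha
      rw [map_mul, map_mul, he σ a.1 (by omega) (by omega),
        ← hQ a.2 (by omega) (by omega) (by omega)]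
      simp

lemma two_mul_ES_two (s : Finset ι) (f : ι → R) :
    2 * ES 2 s f = (∑ i ∈ s, f i) ^ 2 - ∑ i ∈ s, f i ^ 2 := by
  classical
  induction s using Finset.induction_on with
  | empty => simp [ES_empty]
  | insert a s ha ih =>
    rw [ES_insert 1 ha, ES_one, mul_add, ih, Finset.sum_insert ha, Finset.sum_insert ha]
    ring

/-- The symmetric functions `∑ xᵢᵐ` and `∑_{i<j} (xᵢ xⱼ)ᵐ` are universal integer polynomials in
the elementary symmetric functions, the same for all numbers of variables. For the second one,
the fundamental theorem in `2m` variables shows that the Newton polynomial `pₘ² - p₂ₘ` is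
divisible by `2`. -/
lemma exists_universal (m : ℕ) (hm : 0 < m) :
    ∃ Q₁ Q₂ : MvPolynomial (Fin (2 * m)) ℤ, ∀ (σ A : Type) [CommRing A] (s : Finset σ) (x : σ → A),
      (∑ i ∈ s, x i ^ m = MvPolynomial.aeval (fun i : Fin (2 * m) => ES (i + 1) s x) Q₁) ∧
      (ES 2 s (fun i => x i ^ m) =
        MvPolynomial.aeval (fun i : Fin (2 * m) => ES (i + 1) s x) Q₂) := by
  obtain ⟨Q₁, hQ₁⟩ := exists_newton (2 * m) m hm (by omega)
  obtain ⟨Q₃, hQ₃⟩ := exists_newton (2 * m) (2 * m) (by omega) le_rfl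
  have hsym : (ES 2 Finset.univ (fun i : Fin (2 * m) =>
      (MvPolynomial.X i : MvPolynomial (Fin (2 * m)) ℤ) ^ m)).IsSymmetric := by
    intro e
    have h1 : (2 : MvPolynomial (Fin (2 * m)) ℤ) ≠ 0 := two_ne_zero
    apply mul_left_cancel₀ h1
    have h2 : (2 : MvPolynomial (Fin (2 * m)) ℤ) = MvPolynomial.rename e 2 :=
      (map_ofNat (MvPolynomial.rename e) 2).symm
    nth_rw 1 [h2]
    rw [← map_mul, two_mul_ES_two]
    simp only [map_sub, map_pow, map_sum, MvPolynomial.rename_X]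
    rw [Equiv.sum_comp e (fun i => (MvPolynomial.X i : MvPolynomial (Fin (2 * m)) ℤ) ^ m),
      Equiv.sum_comp e (fun i => ((MvPolynomial.X i : MvPolynomial (Fin (2 * m)) ℤ) ^ m) ^ 2)]
  obtain ⟨Q₂, hQ₂⟩ := MvPolynomial.esymmAlgHom_surjective (σ := Fin (2 * m)) ℤ (n := 2 * m)
    (by simp) ⟨_, hsym⟩
  have hQ₂' := congrArg Subtype.val hQ₂
  rw [MvPolynomial.esymmAlgHom_apply] at hQ₂'
  have hdiv : 2 * Q₂ = Q₁ ^ 2 - Q₃ := by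
    apply MvPolynomial.esymmAlgHom_injective (σ := Fin (2 * m)) ℤ (n := 2 * m) (by simp)
    apply Subtype.ext
    rw [MvPolynomial.esymmAlgHom_apply, MvPolynomial.esymmAlgHom_apply]
    simp only [map_sub, map_mul, map_pow, map_ofNat]
    rw [← hQ₁, ← hQ₃, hQ₂', two_mul_ES_two]
    simp only [MvPolynomial.psum, ← pow_mul, mul_comm m 2]
  refine ⟨Q₁, Q₂, ?_⟩
  have key : ∀ (σ A : Type) [Fintype σ] [CommRing A] (x : σ → A),
      (∑ i, x i ^ m = MvPolynomial.aeval (fun i : Fin (2 * m) => ES (i + 1) Finset.univ x) Q₁) ∧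
      (ES 2 Finset.univ (fun i => x i ^ m) =
        MvPolynomial.aeval (fun i : Fin (2 * m) => ES (i + 1) Finset.univ x) Q₂) := by
    intro σ A _ _ x
    have h1 : ∀ Q : MvPolynomial (Fin (2 * m)) ℤ,
        MvPolynomial.aeval (fun i : Fin (2 * m) => ES (i + 1) Finset.univ x) Q =
        MvPolynomial.aeval x (MvPolynomial.aeval
          (fun i : Fin (2 * m) => MvPolynomial.esymm σ ℤ (i + 1)) Q) := by
      intro Q
      rw [← AlgHom.comp_apply, MvPolynomial.comp_aeval]
      simp only [aeval_esymm_eq_ES]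
    have h2 : ES 2 Finset.univ (fun i : σ => (MvPolynomial.X i : MvPolynomial σ ℤ) ^ m) =
        MvPolynomial.aeval (fun i : Fin (2 * m) => MvPolynomial.esymm σ ℤ (i + 1)) Q₂ := by
      have h3 : (2 : MvPolynomial σ ℤ) ≠ 0 := two_ne_zero
      apply mul_left_cancel₀ h3
      have h4 := congrArg
        (MvPolynomial.aeval (fun i : Fin (2 * m) => MvPolynomial.esymm σ ℤ (i + 1))) hdiv
      simp only [map_sub, map_mul, map_pow, map_ofNat] at h4
      rw [h4, ← hQ₁, ← hQ₃, two_mul_ES_two]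
      simp only [MvPolynomial.psum, ← pow_mul, mul_comm m 2]
    rw [h1, h1, ← hQ₁, ← h2]
    simp [MvPolynomial.psum, ES]
  intro σ A _ s x
  have := key s A (fun i => x i)
  simp only [ES_attach (f := x)] at this
  rw [ES_attach (f := fun i => x i ^ m), Finset.sum_coe_sort s (fun i => x i ^ m)] at this
  exact this

end Symm

/-- Enlarging a family by small terms changes its elementary symmetric functions only slightly. -/
lemma v_ES_sub_le {F ι : Type} [Field F] (j : ℕ) {s t : Finset ι} (hst : s ⊆ t)
    (f : ι → LaurentSeries F) (δ : WithZero (Multiplicative ℤ)) (h1 : ∀ i ∈ t, vL F (f i) ≤ 1)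
    (hδ : ∀ i ∈ t, i ∉ s → vL F (f i) ≤ δ) : vL F (ES j t f - ES j s f) ≤ δ := by
  classical
  unfold ES
  -- The difference is a sum over the `j`-subsets of `t` that are not contained in `s`.
  rw [← Finset.sum_sdiff (Finset.powersetCard_mono hst), add_sub_cancel_right]
  refine Valuation.map_sum_le _ fun u hu => ?_
  rw [Finset.mem_sdiff, Finset.mem_powersetCard, Finset.mem_powersetCard] at hu
  obtain ⟨i, hi, his⟩ : ∃ i ∈ u, i ∉ s := by
    by_contra! h
    exact hu.2 ⟨h, hu.1.2⟩
  rw [← Finset.mul_prod_erase _ _ hi, map_mul, map_prod]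
  calc _ ≤ δ * 1 := by
        refine mul_le_mul' (hδ i (hu.1.1 hi) his) ?_
        refine Finset.prod_le_one' fun k hk => h1 k (hu.1.1 (Finset.mem_of_mem_erase hk))
    _ = δ := mul_one _

end Thakur

/-! ### The ratio `e₂ / e₁²` in characteristic two -/

namespace Thakur

open WithZero Filter Topology

lemma ES_two_geom {R : Type} [CommRing R] (u : R) (N : ℕ) :
    ES 2 (Finset.range N) (fun i => u ^ i) * ((1 - u) ^ 2 * (1 + u)) =
      (1 - u ^ N) * (u - u ^ N) := by
  induction N with
  | zero => simp [ES_empty]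
  | succ N ih =>
    rw [Finset.range_add_one, ES_insert 1 (by simp), add_mul, ih, ES_one]
    have h := geom_sum_mul_neg u N
    linear_combination (u ^ N * (1 - u) * (1 + u)) * h

/-- In characteristic two, `e₂ / e₁²` of the family `1, u, …, u ^ (N - 1)`. -/
noncomputable def sGeom {L : Type} [Field L] (N : ℕ) (u : L) : L :=
  (u - u ^ N) / ((1 + u) * (1 - u ^ N))

lemma ES_two_geom_eq {L : Type} [Field L] [CharP L 2] (u : L) (N : ℕ) (hu : u ≠ 1)
    (huN : u ^ N ≠ 1) :
    ES 2 (Finset.range N) (fun i => u ^ i) =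
      (∑ i ∈ Finset.range N, u ^ i) ^ 2 * sGeom N u := by
  have h1 : 1 - u ≠ 0 := sub_ne_zero.2 hu.symm
  have h2 : 1 - u ^ N ≠ 0 := sub_ne_zero.2 huN.symm
  have h3 : 1 + u ≠ 0 := by rwa [← CharTwo.sub_eq_add]
  have h4 : ∑ i ∈ Finset.range N, u ^ i = (1 - u ^ N) / (1 - u) := by
    rw [eq_div_iff h1, geom_sum_mul_neg]
  rw [h4, sGeom, ← mul_left_inj' (mul_ne_zero (pow_ne_zero 2 h1) h3), ES_two_geom]
  field_simp

section Smooth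

variable {F : Type} [Field F]

lemma eq_of_dvd_monic {P R : F[X]} (hP : P.Monic) (hPi : Irreducible P) (hR : R.Monic)
    (hRi : Irreducible R) (h : R ∣ P) : R = P :=
  eq_of_monic_of_associated hR hP (hRi.associated_of_dvd hPi h)

/-- In characteristic two `e₂ / e₁²` is additive over products of families, hence over the Euler
product: for the set `Y` of monic polynomials `∏ P ^ i_P` with `P ∈ Q`, `i_P < N`, it is the sum of
the local terms `sGeom N (φ P)`. The set `Y` contains every monic polynomial with all prime factors
in `Q` which is divisible by no `P ^ N`. -/
lemma exists_smooth {L : Type} [Field L] [CharP L 2] (φ : F[X] →* L) (N : ℕ) (Q : Finset F[X])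
    (hQ : ∀ P ∈ Q, P.Monic ∧ Irreducible P) (h1 : ∀ P ∈ Q, φ P ≠ 1)
    (hN : ∀ P ∈ Q, φ P ^ N ≠ 1) :
    ∃ Y : Finset F[X], (∀ m ∈ Y, m.Monic ∧ ∀ R : F[X], R.Monic → Irreducible R → R ∣ m → R ∈ Q) ∧
      (∀ m : F[X], m.Monic → (∀ R : F[X], R.Monic → Irreducible R → R ∣ m → R ∈ Q) →
        (∀ P ∈ Q, ¬ P ^ N ∣ m) → m ∈ Y) ∧
      ES 2 Y φ = (∑ m ∈ Y, φ m) ^ 2 * ∑ P ∈ Q, sGeom N (φ P) := by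
  classical
  induction Q using Finset.induction_on with
  | empty =>
    refine ⟨{1}, ?_, ?_, ?_⟩
    · intro m hm
      rw [Finset.mem_singleton] at hm
      subst hm
      exact ⟨monic_one, fun R _ hR h => absurd (isUnit_of_dvd_one h) hR.not_isUnit⟩
    · intro m hm h _
      by_contra hne
      have h2 : ¬ IsUnit m := fun hu => hne (by simp [hm.eq_one_of_isUnit hu])
      obtain ⟨R, hRm, hRi, hRd⟩ := exists_monic_irreducible_factor m h2
      simpa using h R hRm hRi hRd
    · rw [← insert_empty_eq, ES_insert 1 (by simp)]
      simp [ES_empty]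
  | insert P Q hPQ ih =>
    obtain ⟨Y, hY1, hY2, hY3⟩ := ih (fun R hR => hQ R (by simp [hR]))
      (fun R hR => h1 R (by simp [hR])) (fun R hR => hN R (by simp [hR]))
    obtain ⟨hPm, hPi⟩ := hQ P (by simp)
    have hPY : ∀ m ∈ Y, ¬ P ∣ m := fun m hm h => hPQ ((hY1 m hm).2 P hPm hPi h)
    have hP0 : P ≠ 0 := hPi.ne_zero
    have hinj : Set.InjOn (fun x : ℕ × F[X] => P ^ x.1 * x.2)
        (Finset.range N ×ˢ Y : Finset (ℕ × F[X])) := by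
      have aux : ∀ i j : ℕ, ∀ m n : F[X], m ∈ Y → P ^ i * m = P ^ j * n → j ≤ i := by
        intro i j m n hm h
        by_contra! hij
        obtain ⟨c, rfl⟩ := Nat.exists_eq_add_of_lt hij
        rw [pow_succ, pow_add, mul_assoc, mul_assoc] at h
        refine hPY m hm ⟨P ^ c * n, ?_⟩
        rw [mul_left_cancel₀ (pow_ne_zero i hP0) h]
        ring
      rintro ⟨i, m⟩ hm ⟨j, n⟩ hn h
      simp only [Finset.coe_product, Set.mem_prod, Finset.mem_coe] at hm hn h
      have hij : i = j := le_antisymm (aux j i n m hn.2 h.symm) (aux i j m n hm.2 h)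
      subst hij
      rw [mul_left_cancel₀ (pow_ne_zero i hP0) h]
    refine ⟨(Finset.range N ×ˢ Y).image (fun x => P ^ x.1 * x.2), ?_, ?_, ?_⟩
    · intro m' hm'
      obtain ⟨⟨i, m⟩, hm, rfl⟩ := Finset.mem_image.1 hm'
      rw [Finset.mem_product] at hm
      refine ⟨(hPm.pow i).mul (hY1 m hm.2).1, fun R hRm hRi hR => ?_⟩
      rcases hRi.prime.dvd_or_dvd hR with h | h
      · rw [eq_of_dvd_monic hPm hPi hRm hRi (hRi.prime.dvd_of_dvd_pow h)]
        simp
      · exact Finset.mem_insert_of_mem ((hY1 m hm.2).2 R hRm hRi h)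
    · intro m' hm' hR hPN
      have hfin : FiniteMultiplicity P m' :=
        FiniteMultiplicity.of_prime_left hPi.prime hm'.ne_zero
      obtain ⟨m, hmm, hPm'⟩ := hfin.exists_eq_pow_mul_and_not_dvd
      set i := multiplicity P m'
      have hmd : m ∣ m' := ⟨P ^ i, by rw [mul_comm]; exact hmm⟩
      refine Finset.mem_image.2 ⟨(i, m), Finset.mem_product.2 ⟨?_, ?_⟩, hmm.symm⟩
      · rw [Finset.mem_range]
        by_contra! hle
        exact hPN P (by simp) ((pow_dvd_pow P hle).trans ⟨m, hmm⟩)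
      · refine hY2 m ?_ ?_ ?_
        · exact (hPm.pow i).of_mul_monic_left (hmm ▸ hm')
        · intro R hRm hRi hRd
          rcases Finset.mem_insert.1 (hR R hRm hRi (hRd.trans hmd)) with rfl | h
          · exact absurd hRd hPm'
          · exact h
        · intro R hRQ hRd
          exact hPN R (by simp [hRQ]) (hRd.trans hmd)
    · rw [ES_image _ _ _ hinj, Finset.sum_image hinj, Finset.sum_insert hPQ]
      simp only [map_mul, map_pow]
      rw [ES_two_product (Finset.range N) Y (fun i => φ P ^ i) φ, Finset.sum_product,
        ← CharTwo.sum_sq, hY3, ES_two_geom_eq (φ P) N (h1 P (by simp)) (hN P (by simp))]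
      simp only [← Finset.mul_sum, ← Finset.sum_mul]
      ring

end Smooth

end Thakur

/-! ### Carlitz polynomials -/

namespace Thakur

open WithZero Filter Topology

section Monics

variable (F : Type) [Field F] [Fintype F]

open Classical in
/-- The monic polynomials of degree `i`. -/
noncomputable def monicsOfDegree (i : ℕ) : Finset F[X] :=
  Finset.univ.image fun c : Fin i → F => X ^ i + ((degreeLTEquiv F i).symm c : F[X])

lemma mem_monicsOfDegree {i : ℕ} {a : F[X]} :
    a ∈ monicsOfDegree F i ↔ a.Monic ∧ a.natDegree = i := by
  simp only [monicsOfDegree, Finset.mem_image, Finset.mem_univ, true_and]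
  constructor
  · rintro ⟨c, rfl⟩
    have h := mem_degreeLT.1 ((degreeLTEquiv F i).symm c).2
    refine ⟨monic_X_pow_add h, ?_⟩
    rw [natDegree_add_eq_left_of_degree_lt (by simpa using h), natDegree_X_pow]
  · rintro ⟨h, rfl⟩
    have h1 : a - X ^ a.natDegree ∈ degreeLT F a.natDegree := by
      rw [mem_degreeLT, degree_lt_iff_coeff_zero]
      intro m hm
      rw [coeff_sub, coeff_X_pow]
      rcases hm.eq_or_lt with rfl | h2
      · simp [h.coeff_natDegree]
      · simp [h2.ne', coeff_eq_zero_of_natDegree_lt h2]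
    refine ⟨degreeLTEquiv F _ ⟨_, h1⟩, ?_⟩
    rw [LinearEquiv.symm_apply_apply]
    ring

lemma card_monicsOfDegree (i : ℕ) : (monicsOfDegree F i).card = Fintype.card F ^ i := by
  classical
  rw [monicsOfDegree, Finset.card_image_of_injective]
  · simp
  · intro c c' h
    have h1 := add_left_cancel h
    exact (degreeLTEquiv F i).symm.injective (Subtype.ext h1)

open Classical in
/-- The monic polynomials of degree less than `d`. -/
noncomputable def monics (d : ℕ) : Finset F[X] :=
  (Finset.range d).biUnion (monicsOfDegree F)

variable {F}

lemma mem_monics {d : ℕ} {a : F[X]} : a ∈ monics F d ↔ a.Monic ∧ a.natDegree < d := by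
  simp [monics, mem_monicsOfDegree]; tauto

lemma card_monics (d : ℕ) :
    (monics F d).card = ∑ i ∈ Finset.range d, Fintype.card F ^ i := by
  classical
  rw [monics, Finset.card_biUnion]
  · simp [card_monicsOfDegree]
  · intro i _ j _ hij
    rw [Function.onFun, Finset.disjoint_left]
    intro a ha hb
    exact hij (((mem_monicsOfDegree F).1 ha).2.symm.trans ((mem_monicsOfDegree F).1 hb).2)

end Monics

section Carlitz

variable {L : Type} [Field L]

/-- The product `D_d` of all monic polynomials of degree `d`, given by Carlitz's recursion
`D_{d+1} = (T^(q^(d+1)) - T) D_d^q`. -/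
noncomputable def cD (q : ℕ) (t : L) : ℕ → L
  | 0 => 1
  | d + 1 => (t ^ q ^ (d + 1) - t) * cD q t d ^ q

/-- The polynomial `E_d` with `z E_d(z^(q-1)) = ∏ (z - a)`, the product over all `a` of degree
less than `d`; it is defined by the recursion `e_{d+1} = e_d^q - D_d^(q-1) e_d` for
`e_d(z) = z E_d(z^(q-1))`. -/
noncomputable def cE (q : ℕ) (t : L) : ℕ → L[X]
  | 0 => 1
  | d + 1 => X * cE q t d ^ q - C (cD q t d ^ (q - 1)) * cE q t d

lemma cE_monic {q : ℕ} (hq : 1 < q) (t : L) (d : ℕ) :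
    (cE q t d).Monic ∧ (cE q t d).natDegree = ∑ i ∈ Finset.range d, q ^ i := by
  induction d with
  | zero => simp [cE]
  | succ d ih =>
    have hm : (X * cE q t d ^ q).Monic := monic_X.mul (ih.1.pow q)
    have hd : (X * cE q t d ^ q).natDegree = 1 + q * (cE q t d).natDegree := by
      rw [monic_X.natDegree_mul (ih.1.pow q), natDegree_X, ih.1.natDegree_pow]
    have hlt : (C (cD q t d ^ (q - 1)) * cE q t d).degree < (X * cE q t d ^ q).degree := by
      apply degree_lt_degree
      refine (natDegree_C_mul_le _ _).trans_lt ?_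
      rw [hd]
      nlinarith
    rw [cE]
    refine ⟨hm.sub_of_left hlt, ?_⟩
    rw [natDegree_sub_eq_left_of_natDegree_lt, hd, ih.2, Finset.sum_range_succ', Finset.mul_sum]
    · simp only [pow_succ', pow_zero]; rw [add_comm]
    · refine (natDegree_C_mul_le _ _).trans_lt ?_
      rw [hd]
      nlinarith

variable [CharP L 2] {q r : ℕ} (hqr : q = 2 ^ r) (t : L)

include hqr in
lemma frob_add {A : Type} [CommRing A] [CharP A 2] (a b : A) : (a + b) ^ q = a ^ q + b ^ q := by
  rw [hqr]; exact add_pow_char_pow a b 2 r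

include hqr in
lemma frob_sub {A : Type} [CommRing A] [CharP A 2] (a b : A) : (a - b) ^ q = a ^ q - b ^ q := by
  rw [hqr]; exact sub_pow_char_pow (p := 2) a b r

/-- The functional equation `e_{d+1}(T z) = T e_{d+1}(z) + (T^(q^(d+1)) - T) e_d(z)^q` in terms
of `E_d`. -/
lemma cE_functional (hqr : q = 2 ^ r) (d : ℕ) :
    C t * (cE q t (d + 1)).comp (C (t ^ (q - 1)) * X) =
      C t * cE q t (d + 1) + C (t ^ q ^ (d + 1) - t) * X * cE q t d ^ q := by
  obtain ⟨n, hn⟩ : ∃ n, q = n + 1 := ⟨q - 1, by have := Nat.two_pow_pos r; omega⟩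
  have hn1 : q - 1 = n := by omega
  induction d with
  | zero =>
    simp only [cE, cD, hn1, one_pow, map_one, mul_one, sub_comp, X_comp, one_comp, zero_add,
      pow_one, map_sub, map_pow]
    rw [hn]; ring
  | succ d ih =>
    -- Both sides are rewritten in terms of `E_{d+1}` and `E_d`; the terms in `E_{d+1}^q` are
    -- expanded by the recursion, and `e1` encodes the recursion for `D_{d+1}`.
    have h2 : cE q t (d + 2) = X * cE q t (d + 1) ^ q - C (cD q t (d + 1) ^ n) * cE q t (d + 1) := by
      rw [cE, hn1]
    have h1 : cE q t (d + 1) = X * cE q t d ^ q - C (cD q t d ^ n) * cE q t d := by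
      rw [cE, hn1]
    have h1q : cE q t (d + 1) ^ q =
        X ^ q * (cE q t d ^ q) ^ q - C (cD q t d ^ n) ^ q * cE q t d ^ q := by
      rw [h1, frob_sub hqr, mul_pow, mul_pow]
    have hq1 : (C t : L[X]) ^ q = C t ^ n * C t := by rw [hn, pow_succ]
    have hb : (t ^ q ^ (d + 1) - t) ^ q = t ^ q ^ (d + 2) - t ^ q := by
      rw [frob_sub hqr, ← pow_mul, ← pow_succ]
    have hb' : (t ^ q ^ (d + 1) - t) ^ n * (t ^ q ^ (d + 1) - t) = t ^ q ^ (d + 2) - t ^ q := by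
      rw [← hb, ← pow_succ, hn]
    have ihq := congrArg (· ^ q) ih
    simp only [mul_pow, frob_add hqr] at ihq
    rw [hn1] at ih ihq ⊢
    have hD : cD q t (d + 1) ^ n = (t ^ q ^ (d + 1) - t) ^ n * (cD q t d ^ n) ^ q := by
      rw [cD, mul_pow, ← pow_mul, ← pow_mul, mul_comm q n]
    have e1 : (C (cD q t (d + 1) ^ n) : L[X]) * C (t ^ q ^ (d + 1) - t) =
        (C (t ^ q ^ (d + 2)) - C t ^ q) * C (cD q t d ^ n) ^ q := by
      rw [← C_mul, ← C_pow, ← C_pow, ← C_sub, ← C_mul, ← hb', hD]; congr 1; ring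
    have e2 : (C (t ^ q ^ (d + 1) - t) : L[X]) ^ q = C (t ^ q ^ (d + 2)) - C t ^ q := by
      rw [← C_pow, hb, C_sub, C_pow (n := q)]
    have e3 : (C (t ^ q ^ (d + 2) - t) : L[X]) = C (t ^ q ^ (d + 2)) - C t := by rw [C_sub]
    rw [h2, sub_comp, mul_comp, mul_comp, X_comp, C_comp, pow_comp, C_pow, e3]
    rw [C_pow] at ih ihq
    rw [e2] at ihq
    rw [hq1] at ihq e1
    linear_combination (X : L[X]) * ihq - C (cD q t (d + 1) ^ n) * ih - X * cE q t d ^ q * e1 -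
      X * (C (t ^ q ^ (d + 2)) - C t ^ n * C t) * h1q

/-- The additive polynomial `e_d(z) = z E_d(z^(q-1))`. -/
noncomputable def ce (q : ℕ) (t : L) (d : ℕ) (y : L) : L := y * (cE q t d).eval (y ^ (q - 1))

omit [CharP L 2] in
lemma ce_zero (y : L) : ce q t 0 y = y := by simp [ce, cE]

omit [CharP L 2] in
lemma ce_succ (hq : 0 < q) (d : ℕ) (y : L) :
    ce q t (d + 1) y = ce q t d y ^ q - cD q t d ^ (q - 1) * ce q t d y := by
  obtain ⟨n, rfl⟩ : ∃ n, q = n + 1 := ⟨q - 1, by omega⟩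
  simp only [ce, cE, eval_sub, eval_mul, eval_X, eval_pow, eval_C, add_tsub_cancel_right]
  ring

lemma ce_add (hqr : q = 2 ^ r) (d : ℕ) (y z : L) :
    ce q t d (y + z) = ce q t d y + ce q t d z := by
  induction d with
  | zero => simp [ce_zero]
  | succ d ih =>
    have hq : 0 < q := hqr ▸ Nat.two_pow_pos r
    rw [ce_succ t hq, ce_succ t hq, ce_succ t hq, ih, frob_add hqr]
    ring

omit [CharP L 2] in
lemma ce_smul (hq : 0 < q) (d : ℕ) (c y : L) (hc : c ^ q = c) :
    ce q t d (c * y) = c * ce q t d y := by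
  induction d with
  | zero => simp [ce_zero]
  | succ d ih =>
    rw [ce_succ t hq, ce_succ t hq, ih, mul_pow, hc]
    ring

lemma ce_mul_T (hqr : q = 2 ^ r) (d : ℕ) (y : L) :
    ce q t (d + 1) (t * y) =
      t * ce q t (d + 1) y + (t ^ q ^ (d + 1) - t) * ce q t d y ^ q := by
  have h := congrArg (eval (y ^ (q - 1))) (cE_functional t hqr d)
  simp only [eval_mul, eval_add, eval_comp, eval_pow, eval_C, eval_X] at h
  obtain ⟨n, hn⟩ : ∃ n, q = n + 1 := ⟨q - 1, by have := Nat.two_pow_pos r; omega⟩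
  have hn1 : q - 1 = n := by omega
  have hy : y ^ q = y * y ^ n := by rw [hn, pow_succ']
  simp only [ce, mul_pow, hn1, hy] at h ⊢
  linear_combination y * h

lemma ce_pow_T (hqr : q = 2 ^ r) (d : ℕ) :
    (∀ i < d, ce q t d (t ^ i) = 0) ∧ ce q t d (t ^ d) = cD q t d := by
  have hq : 0 < q := hqr ▸ Nat.two_pow_pos r
  induction d with
  | zero => simp [ce_zero, cD]
  | succ d ih =>
    have h1 : ∀ i < d + 1, ce q t (d + 1) (t ^ i) = 0 := by
      intro i hi
      induction i with
      | zero =>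
        rw [pow_zero, ce_succ t hq]
        rcases d with _ | d
        · simp [ce_zero, cD]
        · rw [← pow_zero t, ih.1 0 (by omega)]
          simp [hq.ne']
      | succ i ihi =>
        rw [pow_succ', ce_mul_T t hqr, ihi (by omega), ih.1 i (by omega)]
        simp [hq.ne']
    refine ⟨h1, ?_⟩
    rw [pow_succ', ce_mul_T t hqr, h1 d (by omega), ih.2, cD]
    ring

end Carlitz

section Roots

variable {L : Type} [Field L] [CharP L 2] {F : Type} [Field F] [Fintype F] (ψ : F[X] →+* L)

/-- `e_d` is `F`-linear and kills `1, T, …, T^(d-1)`. -/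
lemma ce_map_eq_zero {r : ℕ} (hqr : Fintype.card F = 2 ^ r) (d : ℕ) (a : F[X])
    (ha : a.natDegree < d) : ce (Fintype.card F) (ψ X) d (ψ a) = 0 := by
  have key : ∀ s : Finset ℕ, (∀ i ∈ s, i < d) →
      ce (Fintype.card F) (ψ X) d (ψ (∑ i ∈ s, C (a.coeff i) * X ^ i)) = 0 := by
    classical
    intro s hs
    induction s using Finset.induction_on with
    | empty => simp [ce]
    | insert i s hi ih =>
      rw [Finset.sum_insert hi, map_add, ce_add _ hqr, ih fun j hj => hs j (by simp [hj]), map_mul,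
        ce_smul _ Fintype.card_pos, map_pow, (ce_pow_T _ hqr d).1 i (hs i (by simp))]
      · simp
      · rw [← map_pow, ← map_pow, FiniteField.pow_card]
  rw [a.as_sum_range_C_mul_X_pow' ha]
  exact key _ (by simp)

/-- `E_d` is the product of `Z - a^(q-1)` over the monic `a` of degree less than `d`: these are
distinct roots of `E_d`, and their number is the degree. -/
lemma cE_eq_prod (hψ : Function.Injective ψ) {r : ℕ} (hqr : Fintype.card F = 2 ^ r) (d : ℕ) :
    cE (Fintype.card F) (ψ X) d =
      ∏ a ∈ monics F d, (X - C (ψ a ^ (Fintype.card F - 1))) := by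
  set q := Fintype.card F with hq
  have hq1 : 1 < q := Fintype.one_lt_card
  obtain ⟨hm, hdeg⟩ := cE_monic hq1 (ψ X) d
  have hpm : (∏ a ∈ monics F d, (X - C (ψ a ^ (q - 1)))).Monic :=
    monic_prod_of_monic _ _ fun a _ => monic_X_sub_C _
  refine (eq_of_monic_of_dvd_of_natDegree_le hpm hm ?_ ?_)
  · refine Finset.prod_dvd_of_coprime ?_ ?_
    · intro a ha b hb hab
      refine isCoprime_X_sub_C_of_isUnit_sub (IsUnit.mk0 _ (sub_ne_zero.2 fun h => hab ?_))
      rw [← map_pow, ← map_pow] at h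
      have h1 := hψ h
      have h2 : q - 1 ≠ 0 := by omega
      refine eq_of_monic_of_associated (mem_monics.1 ha).1 (mem_monics.1 hb).1
        (associated_of_dvd_dvd ?_ ?_)
      · exact (IsIntegrallyClosed.pow_dvd_pow_iff h2).1 h1.dvd
      · exact (IsIntegrallyClosed.pow_dvd_pow_iff h2).1 h1.symm.dvd
    · intro a ha
      rw [dvd_iff_isRoot, IsRoot.def]
      have h := ce_map_eq_zero ψ hqr d a (mem_monics.1 ha).2
      rw [ce] at h
      refine (mul_eq_zero.1 h).resolve_left ?_
      exact (map_ne_zero_iff ψ hψ).2 (mem_monics.1 ha).1.ne_zero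
  · rw [natDegree_prod_of_monic _ _ fun a _ => monic_X_sub_C _, hdeg]
    simp only [natDegree_X_sub_C, Finset.sum_const, smul_eq_mul, mul_one, card_monics]
    exact le_rfl

lemma coeff_pow_frob {L : Type} [Field L] [CharP L 2] {q r : ℕ} (hqr : q = 2 ^ r) (f : L[X])
    (n : ℕ) : (f ^ q).coeff n = if q ∣ n then f.coeff (n / q) ^ q else 0 := by
  subst hqr
  have : ExpChar L 2 := ExpChar.prime Nat.prime_two
  rw [← map_iterateFrobenius_expand 2 f r, coeff_map, coeff_expand (Nat.two_pow_pos r)]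
  split_ifs
  · rw [iterateFrobenius_def]
  · simp

/-- The elementary symmetric functions of the `a^(-(q-1))`, for `a` monic of degree less than `d`,
satisfy Carlitz's recursion; it expresses the `(n+1)`-st one as a rational multiple of the first
one times the `q`-th power of the `n/q`-th one at the previous level. -/
lemma ES_recursion (hψ : Function.Injective ψ) {r : ℕ} (hqr : Fintype.card F = 2 ^ r) (n d : ℕ) :
    ψ (X ^ (1 + (Fintype.card F - 1) * (n + 1)) - X) *
        ES (n + 1) (monics F (d + 1)) (fun a => (ψ a ^ (Fintype.card F - 1))⁻¹) =
      ψ (X ^ Fintype.card F - X) *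
        ES 1 (monics F (d + 1)) (fun a => (ψ a ^ (Fintype.card F - 1))⁻¹) *
        if Fintype.card F ∣ n then
          ES (n / Fintype.card F) (monics F d) (fun a => (ψ a ^ (Fintype.card F - 1))⁻¹) ^
            Fintype.card F
        else 0 := by
  have hfun := cE_functional (ψ X) hqr d
  -- In characteristic two `Z - y = y (1 + y⁻¹ Z)`, so the coefficients of `E_d` are the symmetric
  -- functions of the inverse roots, up to the constant term of `E_d`.
  have hcoeff : ∀ d j, (cE (Fintype.card F) (ψ X) d).coeff j =
      (∏ a ∈ monics F d, ψ a ^ (Fintype.card F - 1)) *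
        ES j (monics F d) (fun a => (ψ a ^ (Fintype.card F - 1))⁻¹) := by
    intro d j
    rw [cE_eq_prod ψ hψ hqr, ← coeff_prod_one_add, ← coeff_C_mul, map_prod, ← Finset.prod_mul_distrib]
    congr 1
    refine Finset.prod_congr rfl fun a ha => ?_
    have h0 : ψ a ≠ 0 := (map_ne_zero_iff ψ hψ).2 (mem_monics.1 ha).1.ne_zero
    rw [CharTwo.sub_eq_add, mul_add, mul_one, ← mul_assoc, ← C_mul,
      mul_inv_cancel₀ (pow_ne_zero _ h0), C_1, one_mul, add_comm]
  have hB : ∏ a ∈ monics F (d + 1), ψ a ^ (Fintype.card F - 1) ≠ 0 :=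
    Finset.prod_ne_zero_iff.2 fun a ha =>
      pow_ne_zero _ ((map_ne_zero_iff ψ hψ).2 (mem_monics.1 ha).1.ne_zero)
  have hn := congrArg (fun f => f.coeff (n + 1)) hfun
  have h0 := congrArg (fun f => f.coeff (0 + 1)) hfun
  simp only [coeff_add, mul_assoc, coeff_C_mul, comp_C_mul_X_coeff, coeff_X_mul,
    coeff_pow_frob hqr, hcoeff, dvd_zero, if_true, Nat.zero_div, ES_zero, mul_one] at hn h0
  have hq : ψ X ^ Fintype.card F = ψ X * ψ X ^ (Fintype.card F - 1) := by
    rw [← pow_succ', Nat.sub_add_cancel Fintype.card_pos]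
  simp only [map_sub, map_pow, map_mul, pow_add, pow_mul, pow_one]
  refine mul_left_cancel₀ hB ?_
  rw [hq]
  simp only [zero_add, pow_one] at h0
  split_ifs at hn ⊢ with hdvd
  · rw [mul_pow] at hn
    linear_combination hn - (ES (n / Fintype.card F) (monics F d)
      (fun a => (ψ a ^ (Fintype.card F - 1))⁻¹) ^ Fintype.card F) * h0
  · linear_combination hn

end Roots

end Thakur

/-! ### Limits of symmetric functions -/

namespace Thakur

open WithZero Filter Topology

section Limits

variable {F : Type} [Field F]

/-- The image of `K = F(T)` in `F((T⁻¹))`. -/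
noncomputable def ratField (F : Type) [Field F] : Subfield (LaurentSeries F) :=
  Subfield.closure ((polyEmb F).range : Set (LaurentSeries F))

lemma polyEmb_mem (a : F[X]) : polyEmb F a ∈ ratField F :=
  Subfield.subset_closure ⟨a, rfl⟩

lemma exists_of_mem_ratField {y : LaurentSeries F} (hy : y ∈ ratField F) :
    ∃ A B : F[X], B ≠ 0 ∧ y * polyEmb F B = polyEmb F A := by
  rw [ratField, Subfield.mem_closure_iff, Subring.closure_eq] at hy
  obtain ⟨_, ⟨A, rfl⟩, _, ⟨B, rfl⟩, rfl⟩ := hy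
  by_cases hB : B = 0
  · exact ⟨0, 1, one_ne_zero, by simp [hB]⟩
  · exact ⟨A, B, hB, div_mul_cancel₀ _ ((map_ne_zero_iff _ polyEmb_injective).2 hB)⟩

/-- Evaluation of an integer polynomial is continuous and preserves subfields. -/
lemma exists_tendsto_aeval {L σ : Type} [Field L] [TopologicalSpace L] [IsTopologicalRing L]
    (K : Subfield L) (Q : MvPolynomial σ ℤ) {g : ℕ → σ → L} {ρ : σ → L} (hρ : ∀ i, ρ i ∈ K)
    (hg : Tendsto g atTop (𝓝 ρ)) :
    ∃ k ∈ K, Tendsto (fun d => MvPolynomial.aeval (g d) Q) atTop (𝓝 k) := by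
  refine ⟨MvPolynomial.aeval ρ Q, ?_, ?_⟩
  · induction Q using MvPolynomial.induction_on with
    | C a => simp
    | add p q hp hq => rw [map_add]; exact add_mem hp hq
    | mul_X p i hp => rw [map_mul, MvPolynomial.aeval_X]; exact mul_mem hp (hρ i)
  · induction Q using MvPolynomial.induction_on with
    | C a => simpa using tendsto_const_nhds
    | add p q hp hq => simp only [map_add]; exact hp.add hq
    | mul_X p i hp =>
      simp only [map_mul, MvPolynomial.aeval_X]
      exact hp.mul ((tendsto_pi_nhds.1 hg) i)

lemma exp_neg_nat_le_one (n : ℕ) : (exp (-(n : ℤ)) : WithZero (Multiplicative ℤ)) ≤ 1 := by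
  rw [← exp_zero, exp_le_exp]; omega

lemma v_inv_pow_le {a : F[X]} (ha : a ≠ 0) {n : ℕ} (hn : 0 < n) :
    vL F ((polyEmb F a ^ n)⁻¹) ≤ exp (-(a.natDegree : ℤ)) := by
  rw [map_inv₀, map_pow, v_polyEmb ha, ← exp_nsmul, ← exp_neg, exp_le_exp]
  simp only [nsmul_eq_mul, neg_le_neg_iff]
  have : (1 : ℤ) ≤ n := by exact_mod_cast hn
  nlinarith [Int.natCast_nonneg a.natDegree]

variable [Fintype F]

lemma monics_mono {d e : ℕ} (h : d ≤ e) : monics F d ⊆ monics F e := fun _ ha =>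
  mem_monics.2 ⟨(mem_monics.1 ha).1, (mem_monics.1 ha).2.trans_le h⟩

/-- If a finite set `Y` of monic polynomials contains all those of degree less than `d`, then
the symmetric functions of `Y` and of `monics F d` agree up to `exp (-d)`. -/
lemma v_ES_monics_sub_le {f : F[X] → LaurentSeries F}
    (hf : ∀ a, a.Monic → vL F (f a) ≤ exp (-(a.natDegree : ℤ))) (j d : ℕ) (Y : Finset F[X])
    (hY : ∀ a ∈ Y, a.Monic) (hd : monics F d ⊆ Y) :
    vL F (ES j Y f - ES j (monics F d) f) ≤ exp (-(d : ℤ)) := by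
  refine v_ES_sub_le j hd f _ (fun a ha => (hf a (hY a ha)).trans (exp_neg_nat_le_one _)) ?_
  intro a ha ha'
  refine (hf a (hY a ha)).trans ?_
  rw [exp_le_exp]
  have : ¬ a.natDegree < d := fun h => ha' (mem_monics.2 ⟨hY a ha, h⟩)
  omega

lemma exists_limit_ES {f : F[X] → LaurentSeries F}
    (hf : ∀ a, a.Monic → vL F (f a) ≤ exp (-(a.natDegree : ℤ))) (j : ℕ) :
    ∃ e, Tendsto (fun d => ES j (monics F d) f) atTop (𝓝 e) :=
  exists_limit fun d => v_ES_monics_sub_le hf j d _ (fun _ ha => (mem_monics.1 ha).1)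
    (monics_mono d.le_succ)

lemma limit_ne_zero {f : F[X] → LaurentSeries F}
    (hf : ∀ a, a.Monic → vL F (f a) ≤ exp (-(a.natDegree : ℤ))) (h1 : f 1 = 1)
    {e : LaurentSeries F} (he : Tendsto (fun d => ES 1 (monics F d) f) atTop (𝓝 e)) : e ≠ 0 := by
  classical
  refine ne_zero_of_tendsto he ?_
  filter_upwards [eventually_ge_atTop 1] with d hd
  have hmem : (1 : F[X]) ∈ monics F d := mem_monics.2 ⟨monic_one, by rw [natDegree_one]; omega⟩
  rw [ES_one, ← Finset.add_sum_erase _ _ hmem, h1]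
  refine (Valuation.map_add_eq_of_lt_left _ ?_).trans (map_one _)
  rw [map_one]
  refine Valuation.map_sum_lt _ one_ne_zero fun a ha => ?_
  obtain ⟨ha1, ha⟩ := Finset.mem_erase.1 ha
  have ham := (mem_monics.1 ha).1
  refine (hf a ham).trans_lt ?_
  rw [← exp_zero, exp_lt_exp]
  have := ham.natDegree_pos.2 ha1
  omega

/-- The limits of the elementary symmetric functions of the `a^(-(q-1))` are rational multiples of
powers of the first one, which is nonzero (it plays the role of the `(q-1)`-st power of the
Carlitz period). -/
lemma exists_period [CharP F 2] {r : ℕ} (hqr : Fintype.card F = 2 ^ r) :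
    ∃ (w : LaurentSeries F) (ρ : ℕ → LaurentSeries F), w ≠ 0 ∧ (∀ j, ρ j ∈ ratField F) ∧
      ∀ j, Tendsto (fun d => ES j (monics F d)
        (fun a => (polyEmb F a ^ (Fintype.card F - 1))⁻¹)) atTop (𝓝 (w ^ j * ρ j)) := by
  have : CharP (LaurentSeries F) 2 :=
    (RingHom.charP_iff_charP (HahnSeries.C : F →+* LaurentSeries F) 2).1 inferInstance
  set q := Fintype.card F with hq
  have hq1 : 1 < q := Fintype.one_lt_card
  have hf : ∀ a : F[X], a.Monic →
      vL F ((polyEmb F a ^ (q - 1))⁻¹) ≤ exp (-(a.natDegree : ℤ)) :=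
    fun _ ha => v_inv_pow_le ha.ne_zero (by omega)
  choose e he using fun j => exists_limit_ES hf j
  have hw : e 1 ≠ 0 := limit_ne_zero hf (by simp) (he 1)
  refine ⟨e 1, fun j => e j / e 1 ^ j, hw, fun j => ?_, fun j => ?_⟩
  · induction j using Nat.strong_induction_on with
    | _ j ih =>
      rcases j with _ | n
      · have h0 : e 0 = 1 := tendsto_nhds_unique (he 0) (by simp [ES_zero])
        simp [h0, one_mem]
      · have hrec : polyEmb F (X ^ (1 + (q - 1) * (n + 1)) - X) * e (n + 1) =
            polyEmb F (X ^ q - X) * e 1 * if q ∣ n then e (n / q) ^ q else 0 := by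
          refine tendsto_nhds_unique
            (((tendsto_add_atTop_iff_nat 1).2 (he (n + 1))).const_mul _) ?_
          refine Tendsto.congr
            (fun d => (ES_recursion (polyEmb F) polyEmb_injective hqr n d).symm) ?_
          refine ((((tendsto_add_atTop_iff_nat 1).2 (he 1)).const_mul _).mul ?_)
          split_ifs
          · exact (he (n / q)).pow q
          · exact tendsto_const_nhds
        have hne : polyEmb F (X ^ (1 + (q - 1) * (n + 1)) - X) ≠ 0 := by
          refine (map_ne_zero_iff _ polyEmb_injective).2 (sub_ne_zero.2 fun h => ?_)
          have h1 := congrArg natDegree h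
          rw [natDegree_X_pow, natDegree_X] at h1
          have : 0 < (q - 1) * (n + 1) := Nat.mul_pos (by omega) (by omega)
          omega
        by_cases hdvd : q ∣ n
        · obtain ⟨s, rfl⟩ := hdvd
          rw [if_pos (dvd_mul_right _ _), Nat.mul_div_cancel_left _ (by omega)] at hrec
          have hs := ih s (by nlinarith)
          have : e (q * s + 1) / e 1 ^ (q * s + 1) = polyEmb F (X ^ q - X) /
              polyEmb F (X ^ (1 + (q - 1) * (q * s + 1)) - X) * (e s / e 1 ^ s) ^ q := by
            rw [div_pow, ← pow_mul, mul_comm s q]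
            field_simp
            linear_combination e 1 ^ (q * s) * hrec
          change e (q * s + 1) / e 1 ^ (q * s + 1) ∈ ratField F
          rw [this]
          exact mul_mem (div_mem (polyEmb_mem _) (polyEmb_mem _)) (pow_mem hs q)
        · rw [if_neg hdvd, mul_zero] at hrec
          change e (n + 1) / e 1 ^ (n + 1) ∈ ratField F
          rw [(mul_eq_zero.1 hrec).resolve_left hne, zero_div]
          exact zero_mem _
  · rw [mul_div_cancel₀ _ (pow_ne_zero _ hw)]
    exact he j

/-- For `k = (q-1)m`, the first two elementary symmetric functions of the `a^(-k)`, over all monic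
`a`, lie in `c K` and in `c² K` for a common `c ≠ 0`. -/
lemma exists_limits [CharP F 2] {r : ℕ} (hqr : Fintype.card F = 2 ^ r) {m : ℕ} (hm : 0 < m) :
    ∃ c k₁ k₂ : LaurentSeries F, c ≠ 0 ∧ k₁ ∈ ratField F ∧ k₂ ∈ ratField F ∧
      Tendsto (fun d => ES 1 (monics F d)
        (fun a => (polyEmb F a ^ ((Fintype.card F - 1) * m))⁻¹)) atTop (𝓝 (c * k₁)) ∧
      Tendsto (fun d => ES 2 (monics F d)
        (fun a => (polyEmb F a ^ ((Fintype.card F - 1) * m))⁻¹)) atTop (𝓝 (c ^ 2 * k₂)) := by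
  obtain ⟨w, ρ, hw, hρ, hlim⟩ := exists_period (F := F) hqr
  obtain ⟨Q₁, Q₂, hQ⟩ := exists_universal m hm
  generalize Fintype.card F - 1 = n at hlim ⊢
  let y : F[X] → LaurentSeries F := fun a => w⁻¹ * (polyEmb F a ^ n)⁻¹
  let g : ℕ → Fin (2 * m) → LaurentSeries F := fun d i => ES (i + 1) (monics F d) y
  have hgl : Tendsto g atTop (𝓝 fun i => ρ (i + 1)) := by
    rw [tendsto_pi_nhds]
    intro i
    have h1 := (hlim (i + 1)).const_mul (w⁻¹ ^ ((i : ℕ) + 1))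
    rw [← mul_assoc, ← mul_pow, inv_mul_cancel₀ hw, one_pow, one_mul] at h1
    exact h1.congr fun d => (ES_smul _ _ _ _).symm
  have hφ : (fun a => (polyEmb F a ^ (n * m))⁻¹) = fun a => w ^ m * y a ^ m := by
    funext a
    rw [mul_pow, ← mul_assoc, ← mul_pow, mul_inv_cancel₀ hw, one_pow, one_mul, inv_pow, ← pow_mul]
  obtain ⟨k₁, hk₁, h1⟩ := exists_tendsto_aeval (ratField F) Q₁ (fun i => hρ _) hgl
  obtain ⟨k₂, hk₂, h2⟩ := exists_tendsto_aeval (ratField F) Q₂ (fun i => hρ _) hgl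
  refine ⟨w ^ m, k₁, k₂, pow_ne_zero _ hw, hk₁, hk₂, ?_, ?_⟩
  · refine (h1.const_mul (w ^ m)).congr fun d => ?_
    rw [hφ, ES_smul, pow_one, ES_one, (hQ F[X] _ (monics F d) y).1]
  · refine (h2.const_mul ((w ^ m) ^ 2)).congr fun d => ?_
    rw [hφ, ES_smul, (hQ F[X] _ (monics F d) y).2]

end Limits

end Thakur

/-! ### The sum over monic irreducible polynomials -/

namespace Thakur

open WithZero Filter Topology

section Sum

variable {F : Type} [Field F]

lemma v_lt_one_of_le {a : F[X]} (ha : 0 < a.natDegree) {u : LaurentSeries F}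
    (hu : vL F u ≤ exp (-(a.natDegree : ℤ))) : vL F u < 1 := by
  refine hu.trans_lt ?_
  rw [← exp_zero, exp_lt_exp]
  omega

lemma v_one_sub {u : LaurentSeries F} (hu : vL F u < 1) : vL F (1 - u) = 1 := by
  rw [Valuation.map_sub_eq_of_lt_left, map_one]
  rwa [map_one]

lemma ne_one_of_v_lt {u : LaurentSeries F} (hu : vL F u < 1) : u ≠ 1 := by
  rintro rfl
  simp at hu

/-- The contribution `sGeom N u` of a prime tends to `u / (1 - u)` as `N` grows. -/
lemma v_sGeom_sub_le [CharP F 2] {u : LaurentSeries F} (hu : vL F u ≤ exp (-1)) (N : ℕ)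
    (hN : 0 < N) : vL F (sGeom N u - u / (1 - u)) ≤ exp (-(N : ℤ)) := by
  have : CharP (LaurentSeries F) 2 :=
    (RingHom.charP_iff_charP (HahnSeries.C : F →+* LaurentSeries F) 2).1 inferInstance
  have hu1 : vL F u < 1 := hu.trans_lt (by rw [← exp_zero, exp_lt_exp]; norm_num)
  have huN : vL F (u ^ N) < 1 := by
    rw [map_pow]; exact pow_lt_one' hu1 hN.ne'
  have h1 : 1 - u ≠ 0 := sub_ne_zero.2 (ne_one_of_v_lt hu1).symm
  have h2 : 1 - u ^ N ≠ 0 := sub_ne_zero.2 (ne_one_of_v_lt huN).symm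
  have h3 : sGeom N u - u / (1 - u) = - (u ^ N / (1 - u ^ N)) := by
    rw [sGeom, ← CharTwo.sub_eq_add 1 u]
    field_simp
    ring
  rw [h3, Valuation.map_neg, map_div₀, v_one_sub huN, div_one, map_pow]
  refine (pow_le_pow_left' hu N).trans ?_
  rw [← exp_nsmul, exp_le_exp]
  simp

variable [Fintype F]

lemma summable_primes {f : F[X] → LaurentSeries F}
    (hf : ∀ a, a.Monic → vL F (f a) ≤ exp (-(a.natDegree : ℤ))) :
    Summable fun P : {P : F[X] // P.Monic ∧ Irreducible P} => f P / (1 - f P) := by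
  refine NonarchimedeanAddGroup.summable_of_tendsto_cofinite_zero
    (tendsto_zero_of_v fun n => ?_)
  rw [eventually_cofinite]
  refine ((monics F n).finite_toSet.preimage Subtype.val_injective.injOn).subset ?_
  intro P hP
  refine Finset.mem_coe.2 (mem_monics.2 ⟨P.2.1, ?_⟩)
  by_contra hn
  refine hP ?_
  have h1 := hf P P.2.1
  rw [map_div₀, v_one_sub (v_lt_one_of_le P.2.2.natDegree_pos h1), div_one]
  refine h1.trans ?_
  rw [exp_le_exp]
  omega

/-- In characteristic two, `e₂ = e₁² S`, where `e₁` and `e₂` are the first two elementary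
symmetric functions of a multiplicative family `φ a`, over all monic `a`, and `S` is the sum of
`φ P / (1 - φ P)` over the monic irreducible `P`. -/
lemma ES_two_eq [CharP F 2] (φ : F[X] →* LaurentSeries F)
    (hφ : ∀ a : F[X], a.Monic → vL F (φ a) ≤ exp (-(a.natDegree : ℤ)))
    {e₁ e₂ : LaurentSeries F} (h1 : Tendsto (fun d => ES 1 (monics F d) φ) atTop (𝓝 e₁))
    (h2 : Tendsto (fun d => ES 2 (monics F d) φ) atTop (𝓝 e₂)) :
    e₂ = e₁ ^ 2 * ∑' P : {P : F[X] // P.Monic ∧ Irreducible P}, φ P / (1 - φ P) := by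
  classical
  have : CharP (LaurentSeries F) 2 :=
    (RingHom.charP_iff_charP (HahnSeries.C : F →+* LaurentSeries F) 2).1 inferInstance
  -- The primes of degree at most `d`, with exponents at most `d`, suffice to produce all monic
  -- polynomials of degree less than `d`.
  let Q : ℕ → Finset F[X] := fun d => (monics F (d + 1)).filter Irreducible
  have hQ : ∀ d, ∀ P ∈ Q d, P.Monic ∧ Irreducible P := fun d P hP =>
    ⟨(mem_monics.1 (Finset.mem_filter.1 hP).1).1, (Finset.mem_filter.1 hP).2⟩
  have hlt : ∀ d, ∀ P ∈ Q d, vL F (φ P) < 1 := fun d P hP =>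
    v_lt_one_of_le (hQ d P hP).2.natDegree_pos (hφ P (hQ d P hP).1)
  choose Y hY1 hY2 hY3 using fun d => exists_smooth φ (d + 1) (Q d) (hQ d)
    (fun P hP => ne_one_of_v_lt (hlt d P hP))
    (fun P hP => ne_one_of_v_lt (by rw [map_pow]; exact pow_lt_one' (hlt d P hP) d.succ_ne_zero))
  have hsub : ∀ d, monics F d ⊆ Y d := by
    intro d a ha
    obtain ⟨ham, had⟩ := mem_monics.1 ha
    refine hY2 d a ham (fun R hR hRi hRa => ?_) fun P hP hPa => ?_
    · have := natDegree_le_of_dvd hRa ham.ne_zero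
      exact Finset.mem_filter.2 ⟨mem_monics.2 ⟨hR, by omega⟩, hRi⟩
    · have h3 := natDegree_le_of_dvd hPa ham.ne_zero
      have h4 := (hQ d P hP).2.natDegree_pos
      rw [natDegree_pow] at h3
      nlinarith
  have hYlim : ∀ j e, Tendsto (fun d => ES j (monics F d) φ) atTop (𝓝 e) →
      Tendsto (fun d => ES j (Y d) φ) atTop (𝓝 e) := by
    intro j e he
    have h0 : Tendsto (fun d => ES j (Y d) φ - ES j (monics F d) φ) atTop (𝓝 0) := by
      refine tendsto_zero_of_v fun n => ?_
      filter_upwards [eventually_ge_atTop n] with d hd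
      refine (v_ES_monics_sub_le hφ j d (Y d) (fun a ha => (hY1 d a ha).1) (hsub d)).trans ?_
      rw [exp_le_exp]; omega
    simpa using h0.add he
  have hS : Tendsto (fun d => ∑ P ∈ Q d, φ P / (1 - φ P)) atTop
      (𝓝 (∑' P : {P : F[X] // P.Monic ∧ Irreducible P}, φ P / (1 - φ P))) := by
    have hmono : Monotone fun d => (Q d).subtype fun P => P.Monic ∧ Irreducible P := by
      intro d e hde
      exact Finset.subtype_mono (Finset.filter_subset_filter _ (monics_mono (by omega)))
    have htop := tendsto_atTop_finset_of_monotone hmono fun P => ⟨P.1.natDegree, by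
      simp only [Finset.mem_subtype]
      exact Finset.mem_filter.2 ⟨mem_monics.2 ⟨P.2.1, by omega⟩, P.2.2⟩⟩
    refine ((summable_primes hφ).hasSum.comp htop).congr fun d => ?_
    exact Finset.sum_subtype_of_mem (fun P => φ P / (1 - φ P)) (hQ d)
  have hS' : Tendsto (fun d => ∑ P ∈ Q d, sGeom (d + 1) (φ P)) atTop
      (𝓝 (∑' P : {P : F[X] // P.Monic ∧ Irreducible P}, φ P / (1 - φ P))) := by
    have h0 : Tendsto (fun d => ∑ P ∈ Q d, sGeom (d + 1) (φ P) - ∑ P ∈ Q d, φ P / (1 - φ P))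
        atTop (𝓝 0) := by
      refine tendsto_zero_of_v fun n => ?_
      filter_upwards [eventually_ge_atTop n] with d hd
      rw [← Finset.sum_sub_distrib]
      refine Valuation.map_sum_le _ fun P hP => ?_
      refine (v_sGeom_sub_le ((hφ P (hQ d P hP).1).trans ?_) _ d.succ_pos).trans ?_
      · have := (hQ d P hP).2.natDegree_pos
        rw [exp_le_exp]; omega
      · rw [exp_le_exp]; push_cast; omega
    simpa using h0.add hS
  refine tendsto_nhds_unique (hYlim 2 e₂ h2) ?_
  exact (((hYlim 1 e₁ h1).pow 2).mul hS').congr fun d => by rw [hY3, ES_one]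

end Sum

end Thakur

open Thakur

/-- If `p = 2` (and `q` is then automatically a power of `2`), then for every positive
integer `k ≡ 0 (mod q - 1)`, the sum `∑_{P ∈ 𝒫₁} 1/(Pᵏ - 1)` over monic irreducible
polynomials converges in `K̂ = F_q((T⁻¹))` and its value lies in `K = F_q(T)`. -/
theorem thakur_sum_rational_char_two (F : Type) [Field F] [Fintype F]
    (hchar : ringChar F = 2) (k : ℕ) (hk : 0 < k)
    (hdvd : (Fintype.card F - 1) ∣ k) :
    Summable (fun P : {P : Polynomial F // P.Monic ∧ Irreducible P} =>
      ((polyEmb F (P : Polynomial F)) ^ k - 1)⁻¹) ∧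
    ∃ A B : Polynomial F, B ≠ 0 ∧
      (∑' P : {P : Polynomial F // P.Monic ∧ Irreducible P},
          ((polyEmb F (P : Polynomial F)) ^ k - 1)⁻¹) * polyEmb F B = polyEmb F A := by
  have : CharP F 2 := ringChar.of_eq hchar
  obtain ⟨r, -, hqr⟩ := FiniteField.card F 2
  obtain ⟨m, rfl⟩ := hdvd
  have hm : 0 < m := Nat.pos_of_mul_pos_left hk
  let φ : F[X] →* LaurentSeries F :=
    { toFun := fun a => (polyEmb F a ^ ((Fintype.card F - 1) * m))⁻¹
      map_one' := by simp
      map_mul' := fun a b => by rw [map_mul, mul_pow, mul_inv] }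
  have hφ : ∀ a : F[X], a.Monic → vL F (φ a) ≤ WithZero.exp (-(a.natDegree : ℤ)) :=
    fun a ha => v_inv_pow_le ha.ne_zero hk
  have hterm : ∀ P : {P : F[X] // P.Monic ∧ Irreducible P},
      ((polyEmb F (P : F[X])) ^ ((Fintype.card F - 1) * m) - 1)⁻¹ = φ P / (1 - φ P) := by
    intro P
    have h0 : polyEmb F (P : F[X]) ^ ((Fintype.card F - 1) * m) ≠ 0 :=
      pow_ne_zero _ ((map_ne_zero_iff _ polyEmb_injective).2 P.2.1.ne_zero)
    change _ = (polyEmb F (P : F[X]) ^ ((Fintype.card F - 1) * m))⁻¹ /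
      (1 - (polyEmb F (P : F[X]) ^ ((Fintype.card F - 1) * m))⁻¹)
    generalize polyEmb F (P : F[X]) ^ ((Fintype.card F - 1) * m) = y at h0 ⊢
    have h1 : 1 - y⁻¹ = (y - 1) * y⁻¹ := by rw [sub_mul, mul_inv_cancel₀ h0, one_mul]
    rw [h1, div_eq_mul_inv, mul_inv, inv_inv, mul_comm _ y, ← mul_assoc, inv_mul_cancel₀ h0, one_mul]
  simp only [hterm]
  obtain ⟨c, k₁, k₂, hc, hk₁, hk₂, h1, h2⟩ := exists_limits hqr hm
  have hne : c * k₁ ≠ 0 := limit_ne_zero hφ (map_one φ) h1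
  have hS := ES_two_eq φ hφ h1 h2
  refine ⟨summable_primes hφ, exists_of_mem_ratField ?_⟩
  have hk0 : k₁ ≠ 0 := right_ne_zero_of_mul hne
  have : ∑' P : {P : F[X] // P.Monic ∧ Irreducible P}, φ P / (1 - φ P) = k₂ / k₁ ^ 2 := by
    rw [eq_div_iff (pow_ne_zero _ hk0)]
    refine mul_left_cancel₀ (pow_ne_zero 2 hc) ?_
    rw [hS]; ring
  rw [this]
  exact div_mem hk₂ (pow_mem hk₁ 2)
end

section
/- Let p be an odd prime. Then in the rational function field F_p(U) one has G_p(U) = (∑_{j=1}^{p−1} U^j/j)/(1−U)^p, and as a formal power series in F_p[[U]] one has G_p(U) = ∑_{j ≥ 1, p ∤ j} U^j/j, where 1/j denotes the inverse of j modulo p. -/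
/-!
Write `(1 - Uᵖ) - (1 - U)ᵖ = ∑ aⱼ Uʲ`. For odd `p` the terms `j = 0` and `j = p` cancel, so only
`1 ≤ j ≤ p - 1` contribute, with `aⱼ = -(-1)ʲ (p choose j)`. From
`j (p choose j) = p (p-1 choose j-1)` and `(p-1 choose j-1) ≡ (-1)ʲ⁻¹ mod p` one gets
`j (aⱼ / p) ≡ 1 mod p`, that is, `aⱼ / p` reduces to `1/j` (`coeff_gpNum_cast`). This is the first
form. For the second, `(1 - U)ᵖ = 1 - Uᵖ` in characteristic `p`, and multiplying
`∑_{p ∤ j} Uʲ/j`, whose coefficients are `p`-periodic, by `1 - Uᵖ` leaves only its part of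
degree less than `p`.
-/

open Polynomial

/-- The numerator of `G_p`: the integer polynomial `((1 - Uᵖ) - (1 - U)ᵖ)/p`
(every coefficient of `(1 - Uᵖ) - (1 - U)ᵖ` is divisible by `p`). -/
noncomputable def gpNum (p : ℕ) : Polynomial ℤ :=
  Polynomial.sum ((1 - Polynomial.X ^ p) - (1 - Polynomial.X) ^ p)
    fun n a => Polynomial.C (a / (p : ℤ)) * Polynomial.X ^ n

/-- The rational function `G_p(u) = ((1 - uᵖ) - (1 - u)ᵖ)/(p (1 - u)ᵖ)`, where the
numerator has been divided by `p` over `ℤ` and then reduced into the field `L`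
(of characteristic `p` in applications). -/
noncomputable def Gp {L : Type*} [Field L] (p : ℕ) (u : L) : L :=
  (Polynomial.aeval u (gpNum p)) / (1 - u) ^ p

lemma gpNum_coeff (p n : ℕ) :
    (gpNum p).coeff n = (((1 - X ^ p) - (1 - X) ^ p : ℤ[X]).coeff n) / (p : ℤ) := by
  rw [gpNum, Polynomial.sum_def, Polynomial.finsetSum_coeff]
  simp only [Polynomial.coeff_C_mul_X_pow]
  rw [Finset.sum_ite_eq]
  split_ifs with h
  · rfl
  · rw [Polynomial.notMem_support_iff.mp h, Int.zero_ediv]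

lemma coeff_one_sub_X_pow (p n : ℕ) :
    ((1 - X : ℤ[X]) ^ p).coeff n = (-1) ^ n * (p.choose n : ℤ) := by
  have h : (1 - X : ℤ[X]) ^ p = ((1 + X : ℤ[X]) ^ p).comp (C (-1) * X) := by
    simp [sub_eq_add_neg]
  rw [h, Polynomial.comp_C_mul_X_coeff, Polynomial.coeff_one_add_X_pow]
  simp [mul_comm]

/-- Follows by induction on `k` from Pascal's rule, as `p` divides `(p choose k+1)`. -/
lemma choose_pred_cast (p : ℕ) [hp : Fact p.Prime] (k : ℕ) (hk : k < p) :
    (((p - 1).choose k : ℕ) : ZMod p) = (-1) ^ k := by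
  induction k with
  | zero => simp
  | succ k ih =>
    have h1 : p.choose (k + 1) = (p - 1).choose k + (p - 1).choose (k + 1) := by
      conv_lhs => rw [← Nat.sub_add_cancel hp.out.one_le]
      rw [Nat.choose_succ_succ]
    have h2 : ((p.choose (k + 1) : ℕ) : ZMod p) = 0 :=
      (ZMod.natCast_eq_zero_iff _ _).2 (hp.out.dvd_choose_self (Nat.succ_ne_zero k) hk)
    rw [h1, Nat.cast_add, ih (by omega)] at h2
    rw [pow_succ]
    linear_combination h2

/-- Modulo `p`, the numerator of `G_p` is `∑_{j=1}^{p-1} Uʲ/j`. -/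
lemma coeff_gpNum_cast (p : ℕ) [hp : Fact p.Prime] (hodd : Odd p) (n : ℕ) :
    (((gpNum p).coeff n : ℤ) : ZMod p) =
      if n ∈ Finset.Icc 1 (p - 1) then (n : ZMod p)⁻¹ else 0 := by
  have hp1 := hp.out.two_le
  have hp0 : (p : ℤ) ≠ 0 := by exact_mod_cast hp.out.ne_zero
  rw [gpNum_coeff]
  simp only [Polynomial.coeff_sub, coeff_one_sub_X_pow, Polynomial.coeff_one,
    Polynomial.coeff_X_pow, Finset.mem_Icc]
  rcases Nat.eq_zero_or_pos n with rfl | hn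
  · simp [hp.out.ne_zero.symm]
  rcases lt_trichotomy n p with hlt | rfl | hgt
  · rw [if_neg hn.ne', if_neg hlt.ne, if_pos ⟨hn, by omega⟩]
    obtain ⟨c, hc⟩ := hp.out.dvd_choose_self hn.ne' hlt
    have hnz : (n : ZMod p) ≠ 0 := fun h =>
      absurd (Nat.le_of_dvd hn ((ZMod.natCast_eq_zero_iff _ _).1 h)) (by omega)
    have hnc : n * c = (p - 1).choose (n - 1) := by
      have h := Nat.add_one_mul_choose_eq (p - 1) (n - 1)
      rw [Nat.sub_add_cancel (by omega : 1 ≤ p), Nat.sub_add_cancel hn, hc] at h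
      exact Nat.eq_of_mul_eq_mul_left hp.out.pos (by rw [h]; ring)
    have hcast : (n : ZMod p) * c = (-1) ^ (n - 1) := by
      rw [← choose_pred_cast p (n - 1) (by omega), ← hnc, Nat.cast_mul]
    have hdiv : ((0 : ℤ) - 0 - (-1) ^ n * (p.choose n : ℤ)) / (p : ℤ) = (-1) ^ (n - 1) * c := by
      apply Int.ediv_eq_of_eq_mul_right hp0
      obtain ⟨m, rfl⟩ : ∃ m, n = m + 1 := ⟨n - 1, by omega⟩
      rw [hc, Nat.add_sub_cancel, pow_succ]
      push_cast
      ring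
    rw [hdiv]
    apply eq_inv_of_mul_eq_one_right
    push_cast
    rw [mul_left_comm, hcast, ← mul_pow]
    simp
  · have hne : ¬ (1 ≤ n ∧ n ≤ n - 1) := by omega
    simp [hn.ne', hodd.neg_one_pow, hne]
  · have hne : ¬ (1 ≤ n ∧ n ≤ p - 1) := by omega
    simp [hn.ne', hgt.ne', hne, Nat.choose_eq_zero_of_lt hgt]

lemma map_gpNum (p : ℕ) [hp : Fact p.Prime] (hodd : Odd p) :
    (gpNum p).map (Int.castRingHom (ZMod p)) =
      ∑ j ∈ Finset.Icc 1 (p - 1), C (j : ZMod p)⁻¹ * X ^ j := by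
  ext n
  rw [Polynomial.coeff_map, Polynomial.finsetSum_coeff]
  simp only [Polynomial.coeff_C_mul_X_pow]
  rw [Finset.sum_ite_eq]
  exact coeff_gpNum_cast p hodd n

/-- The `ℤ`-algebra structure is arbitrary because the one on power series need not be
syntactically the canonical one of a ring. -/
lemma aeval_gpNum (p : ℕ) [hp : Fact p.Prime] (hodd : Odd p) {A : Type*} [CommRing A]
    {_ : Algebra ℤ A} [Algebra (ZMod p) A] (u : A) :
    aeval u (gpNum p) =
      ∑ j ∈ Finset.Icc 1 (p - 1), algebraMap (ZMod p) A (j : ZMod p)⁻¹ * u ^ j := by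
  have h : aeval u (gpNum p) = aeval u ((gpNum p).map (Int.castRingHom (ZMod p))) := by
    rw [Polynomial.aeval_def, Polynomial.aeval_def, Polynomial.eval₂_map]
    congr 1
    exact RingHom.ext_int _ _
  rw [h, map_gpNum p hodd]
  simp

/-- For an odd prime `p`: in `F_p(U)` one has
`G_p(U) = (∑_{j=1}^{p-1} Uʲ/j)/(1-U)ᵖ`, and as a formal power series in `F_p[[U]]`
one has `G_p(U) = ∑_{j ≥ 1, p ∤ j} Uʲ/j`, where `1/j` is the inverse of `j` mod `p`. -/
theorem Gp_alt_forms (p : ℕ) [hp : Fact (Nat.Prime p)] (hodd : Odd p) :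
    (Gp p (RatFunc.X : RatFunc (ZMod p)) =
      (∑ j ∈ Finset.Icc 1 (p - 1),
          (RatFunc.X : RatFunc (ZMod p)) ^ j / (j : RatFunc (ZMod p))) /
        (1 - RatFunc.X) ^ p) ∧
    (Polynomial.aeval (PowerSeries.X : PowerSeries (ZMod p)) (gpNum p) *
        (((1 : PowerSeries (ZMod p)) - PowerSeries.X) ^ p)⁻¹ =
      PowerSeries.mk fun j => if p ∣ j then 0 else (j : ZMod p)⁻¹) := by
  have hp1 := hp.out.two_le
  constructor
  · rw [Gp, aeval_gpNum p hodd]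
    congr 1
    refine Finset.sum_congr rfl fun j _ => ?_
    rw [map_inv₀, map_natCast, mul_comm, div_eq_mul_inv]
  · have : CharP (PowerSeries (ZMod p)) p :=
      charP_of_injective_algebraMap (algebraMap (ZMod p) (PowerSeries (ZMod p))).injective p
    have hpow : ((1 : PowerSeries (ZMod p)) - PowerSeries.X) ^ p = 1 - PowerSeries.X ^ p := by
      rw [sub_pow_char, one_pow]
    -- An invertible constant term makes `⁻¹` a genuine inverse.
    have hconst : PowerSeries.constantCoeff
        (((1 : PowerSeries (ZMod p)) - PowerSeries.X) ^ p) ≠ 0 := by simp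
    rw [eq_comm, PowerSeries.eq_mul_inv_iff_mul_eq hconst, hpow, aeval_gpNum p hodd]
    ext n
    rw [mul_sub, mul_one, map_sub, PowerSeries.coeff_mul_X_pow', map_sum]
    simp only [← PowerSeries.C_eq_algebraMap, PowerSeries.coeff_C_mul, PowerSeries.coeff_X_pow,
      PowerSeries.coeff_mk, mul_ite, mul_one, mul_zero]
    rw [Finset.sum_ite_eq]
    simp only [Finset.mem_Icc]
    by_cases hn : p ≤ n
    · -- The coefficients of degrees `p + m` and `m` agree.
      have hlt : ¬ (1 ≤ n ∧ n ≤ p - 1) := by omega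
      obtain ⟨m, rfl⟩ := Nat.exists_eq_add_of_le hn
      rw [if_pos hn, if_neg hlt, Nat.add_sub_cancel_left]
      simp
    · rw [if_neg hn, sub_zero]
      rcases Nat.eq_zero_or_pos n with rfl | hpos
      · simp
      · rw [if_neg (Nat.not_dvd_of_pos_of_lt hpos (by omega)), if_pos ⟨hpos, by omega⟩]
end

section
/- Let q be a power of a prime p and let k = (q−1)ℓ with ℓ an integer satisfying 1 ≤ ℓ ≤ q/p. Then ∑_{P ∈ P_1} G_p(1/P^k) = 0 in K̂ = F_q((T^{-1})). -/
/-!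
The argument is a logarithmic derivative computation, with the `p`-derivation
`f ↦ (φ(f) - f ^ p) / p` in place of the derivative. It takes place in the monoid algebra
`ℤ[F[X]]` of the multiplicative monoid of polynomials, where `φ` is the lift of Frobenius
`[A] ↦ [A ^ p]` and `[A]` is evaluated at `A ^ (-(q - 1))` in the Laurent series. The value of the
`p`-derivation relative to `f ^ p`, called the defect of `f` (`HasDefect`), is additive on products
because `p = 0` in the target (`HasDefect.mul`).

The defect of the Euler factor `1 - [P] ^ ℓ` is `G_p(P ^ (-k))` (`hasDefect_one_sub`). The defect
of the truncated zeta sum `Z_d = ∑ [A] ^ ℓ`, over monic `A` of degree less than `d`, is zero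
(`hasDefect_zeta`). Indeed it is the symmetric function `(p_{ℓp} - p_ℓ ^ p) / p`, of degree
`ℓp ≤ q`, of the quantities `A ^ (-(q - 1))`. The polynomial `∏_{deg A < d} (X - A)` is `q`-linear,
that is, it only involves the monomials `X ^ (q ^ i)`, and comparing coefficients shows that the
elementary symmetric functions `e_2, …, e_q` of these quantities vanish
(`esymm_monicsLT_eq_zero`). By Newton's identities, carried out over `ℤ` so that `p` can be
cancelled, so does the defect (`exists_psum_defect`).

By unique factorization, `Z_d ∏_{deg P < d} (1 - [P] ^ ℓ)` is `1` up to terms `[A]` with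
`deg A ≥ d` (`zeta_mul_prod_sub_one_mem`), and then its defect is at most `exp (-d)` in absolute
value. By additivity this defect is the partial sum of `G_p(P ^ (-k))` over `deg P < d`
(`valued_sum_Gp_le`), so the partial sums tend to `0`.
-/

open Polynomial

/-! ### Power sums when the higher elementary symmetric functions vanish -/

theorem prime_dvd_sum_pow_sub {R ι : Type*} [CommRing R] {p : ℕ} (hp : p.Prime)
    (s : Finset ι) (x : ι → R) : (p : R) ∣ ∑ i ∈ s, x i ^ p - (∑ i ∈ s, x i) ^ p := by
  classical
  induction s using Finset.induction_on with
  | empty => simp [hp.ne_zero]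
  | insert i s hi ih =>
    rw [Finset.sum_insert hi, Finset.sum_insert hi]
    obtain ⟨r, hr⟩ := exists_add_pow_prime_eq hp (x i) (∑ i ∈ s, x i)
    obtain ⟨c, hc⟩ := ih
    exact ⟨c - x i * (∑ i ∈ s, x i) * r, by rw [hr]; linear_combination hc⟩

/-- Newton's identities when `e_2, …, e_N` vanish under a ring homomorphism `ψ` defined on the
symmetric polynomials only, so that `ψ` need not come from an evaluation. -/
theorem psum_eq_of_esymm_vanish {σ S : Type*} [Fintype σ] [CommRing S]
    (ψ : MvPolynomial.symmetricSubalgebra σ ℤ →+* S) {N : ℕ}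
    (hψ : ∀ j, 2 ≤ j → j ≤ N →
      ψ ⟨MvPolynomial.esymm σ ℤ j, MvPolynomial.esymm_isSymmetric σ ℤ j⟩ = 0)
    (m : ℕ) (hm : 1 ≤ m) (hmN : m ≤ N) :
    ψ ⟨MvPolynomial.psum σ ℤ m, MvPolynomial.psum_isSymmetric σ ℤ m⟩
      = ψ ⟨MvPolynomial.esymm σ ℤ 1, MvPolynomial.esymm_isSymmetric σ ℤ 1⟩ ^ m := by
  set e : ℕ → MvPolynomial.symmetricSubalgebra σ ℤ :=
    fun j => ⟨MvPolynomial.esymm σ ℤ j, MvPolynomial.esymm_isSymmetric σ ℤ j⟩ with he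
  set P : ℕ → MvPolynomial.symmetricSubalgebra σ ℤ :=
    fun j => ⟨MvPolynomial.psum σ ℤ j, MvPolynomial.psum_isSymmetric σ ℤ j⟩ with hP
  have newton : ∀ k, 0 < k → P k = (-1) ^ (k + 1) * k * e k -
      ∑ a ∈ Finset.HasAntidiagonal.antidiagonal k with a.1 ∈ Set.Ioo 0 k, (-1) ^ a.1 * e a.1 * P a.2 := by
    intro k hk
    apply Subtype.ext
    have := MvPolynomial.psum_eq_mul_esymm_sub_sum σ ℤ k hk
    simpa [hP, he] using this
  change ψ (P m) = ψ (e 1) ^ m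
  induction m, hm using Nat.le_induction with
  | base =>
    rw [newton 1 one_pos]
    have : (Finset.HasAntidiagonal.antidiagonal 1).filter (fun a => a.1 ∈ Set.Ioo 0 1) = ∅ := by
      ext a; simp; omega
    rw [this]; simp
  | succ m hm ih =>
    rw [newton (m + 1) (by omega), map_sub, map_mul, hψ (m + 1) (by omega) hmN, mul_zero,
      zero_sub, map_sum, Finset.sum_eq_single (1, m)]
    · simp [ih (by omega), pow_succ']
    · rintro ⟨a, b⟩ hab hne
      simp only [Finset.mem_filter, Finset.HasAntidiagonal.mem_antidiagonal, Set.mem_Ioo] at hab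
      have h1 : a ≠ 1 := by rintro rfl; apply hne; ext <;> simp; omega
      have : ψ (e a) = 0 := hψ a (by omega) (by omega)
      simp [this]
    · intro h; exfalso; apply h; simp; omega

/-- The symmetric polynomial `a = (p_{ℓp} - p_ℓ ^ p) / p` vanishes at every point at which
`e_2, …, e_{ℓp}` vanish. Modulo these elementary symmetric polynomials both `p_{ℓp}` and
`p_ℓ ^ p` become `e_1 ^ (ℓp)` over `ℤ`, where `p` can be cancelled; evaluation at `y` factors
through this quotient. -/
theorem exists_psum_defect {σ K : Type*} [Fintype σ] [Field K]
    (y : σ → K) {p ℓ : ℕ} (hp : p.Prime) (hl : 1 ≤ ℓ)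
    (hy : ∀ j, 2 ≤ j → j ≤ ℓ * p → MvPolynomial.aeval y (MvPolynomial.esymm σ ℤ j) = 0) :
    ∃ a : MvPolynomial σ ℤ, MvPolynomial.psum σ ℤ (ℓ * p) =
      MvPolynomial.psum σ ℤ ℓ ^ p + p * a ∧ MvPolynomial.aeval y a = 0 := by
  classical
  obtain ⟨a, ha⟩ := prime_dvd_sum_pow_sub hp Finset.univ
    (fun i : σ => (MvPolynomial.X i : MvPolynomial σ ℤ) ^ ℓ)
  simp only [← pow_mul] at ha
  have ha' : MvPolynomial.psum σ ℤ (ℓ * p) = MvPolynomial.psum σ ℤ ℓ ^ p + p * a := by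
    rw [← ha]; simp [MvPolynomial.psum]
  have hp0 : (p : MvPolynomial σ ℤ) ≠ 0 := by exact_mod_cast hp.ne_zero
  refine ⟨a, ha', ?_⟩
  have hsym : a.IsSymmetric := by
    intro e
    have h1 := congrArg (MvPolynomial.rename e) ha'
    rw [MvPolynomial.psum_isSymmetric σ ℤ (ℓ * p) e, map_add, map_pow,
      MvPolynomial.psum_isSymmetric σ ℤ ℓ e, map_mul, map_natCast, ha'] at h1
    exact (mul_left_cancel₀ hp0 (add_left_cancel h1)).symm
  let E := MvPolynomial.esymmAlgEquiv σ ℤ (n := Fintype.card σ) rfl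
  -- Kill `E_2, …, E_{ℓp}` in the polynomial ring on the elementary symmetric polynomials.
  let θ : MvPolynomial (Fin (Fintype.card σ)) ℤ →ₐ[ℤ] MvPolynomial (Fin (Fintype.card σ)) ℤ :=
    MvPolynomial.aeval fun i =>
      if 2 ≤ (i : ℕ) + 1 ∧ (i : ℕ) + 1 ≤ ℓ * p then 0 else MvPolynomial.X i
  let ψ : MvPolynomial.symmetricSubalgebra σ ℤ →+* MvPolynomial (Fin (Fintype.card σ)) ℤ :=
    (θ.comp E.symm.toAlgHom).toRingHom
  have hψ : ∀ j, 2 ≤ j → j ≤ ℓ * p →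
      ψ ⟨MvPolynomial.esymm σ ℤ j, MvPolynomial.esymm_isSymmetric σ ℤ j⟩ = 0 := by
    intro j h2 hj
    by_cases hn : j ≤ Fintype.card σ
    · have := MvPolynomial.esymmAlgEquiv_symm_apply (σ := σ) (R := ℤ) rfl
        (⟨j - 1, by omega⟩ : Fin (Fintype.card σ))
      have hj1 : j - 1 + 1 = j := by omega
      simp only [hj1] at this
      change θ (E.symm _) = 0
      rw [this]
      simp only [θ, MvPolynomial.aeval_X, hj1]
      rw [if_pos ⟨h2, hj⟩]
    · have : (⟨MvPolynomial.esymm σ ℤ j, MvPolynomial.esymm_isSymmetric σ ℤ j⟩ :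
          MvPolynomial.symmetricSubalgebra σ ℤ) = 0 := by
        apply Subtype.ext
        simp only [MvPolynomial.esymm]
        rw [Finset.powersetCard_eq_empty.mpr (by simpa using hn)]
        simp
      rw [this, map_zero]
  have key : (p : MvPolynomial (Fin (Fintype.card σ)) ℤ) * ψ ⟨a, hsym⟩ = 0 := by
    have h1 : (⟨_, MvPolynomial.psum_isSymmetric σ ℤ (ℓ * p)⟩ :
        MvPolynomial.symmetricSubalgebra σ ℤ) =
        ⟨_, MvPolynomial.psum_isSymmetric σ ℤ ℓ⟩ ^ p + p * ⟨a, hsym⟩ :=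
      Subtype.ext (by simpa using ha')
    have h2 := congrArg ψ h1
    rw [map_add, map_pow, map_mul, map_natCast,
      psum_eq_of_esymm_vanish ψ hψ (ℓ * p) (Nat.mul_pos hl hp.pos) le_rfl,
      psum_eq_of_esymm_vanish ψ hψ ℓ hl (Nat.le_mul_of_pos_right _ hp.pos), ← pow_mul] at h2
    exact (left_eq_add.mp h2)
  have hψa : ψ ⟨a, hsym⟩ = 0 := by
    refine (mul_eq_zero.mp key).resolve_left ?_
    exact_mod_cast hp.ne_zero
  -- Evaluation at `y` factors through `ψ`, as the killed elementary symmetric functions vanish.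
  let ev : MvPolynomial (Fin (Fintype.card σ)) ℤ →ₐ[ℤ] K :=
    MvPolynomial.aeval fun i => MvPolynomial.aeval y (MvPolynomial.esymm σ ℤ (i + 1))
  have hcomp : ev.comp θ = ev := by
    apply MvPolynomial.algHom_ext
    intro i
    simp only [θ, ev, AlgHom.comp_apply, MvPolynomial.aeval_X]
    split_ifs with h
    · rw [map_zero, hy _ h.1 h.2]
    · simp
  have hE : ((MvPolynomial.aeval y).comp (MvPolynomial.symmetricSubalgebra σ ℤ).val).comp
      E.toAlgHom = ev := by
    apply MvPolynomial.algHom_ext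
    intro i
    have hi : E (MvPolynomial.X i) = ⟨MvPolynomial.esymm σ ℤ (i + 1), _⟩ :=
      E.symm_apply_eq.mp (MvPolynomial.esymmAlgEquiv_symm_apply (R := ℤ) rfl i) |>.symm
    change MvPolynomial.aeval y (E (MvPolynomial.X i)).1 = _
    rw [hi]
    simp [ev]
  have h3 : ev (E.symm ⟨a, hsym⟩) = MvPolynomial.aeval y a := by
    rw [← hE]; simp
  rw [← h3, ← hcomp]
  change ev (ψ ⟨a, hsym⟩) = 0
  rw [hψa, map_zero]

/-! ### The polynomial with roots the polynomials of bounded degree -/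

section Carlitz
variable {F : Type} [Field F] [Fintype F]

theorem finite_degree_lt (F : Type) [Field F] [Fintype F] (d : ℕ) :
    {A : F[X] | A.degree < d}.Finite := by
  have : Finite (Polynomial.degreeLT F d) :=
    Finite.of_equiv _ (Polynomial.degreeLTEquiv F d).symm.toEquiv
  refine (Set.toFinite (Polynomial.degreeLT F d : Set F[X])).subset ?_
  intro A hA
  exact Polynomial.mem_degreeLT.mpr hA

/-- The finite `F`-vector space of polynomials of degree less than `d`. -/
noncomputable def polysLT (F : Type) [Field F] [Fintype F] (d : ℕ) : Finset F[X] :=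
  (finite_degree_lt F d).toFinset

theorem mem_polysLT {d : ℕ} {A : F[X]} : A ∈ polysLT F d ↔ A.degree < d := by
  simp [polysLT]

theorem finite_monic_natDegree_lt (F : Type) [Field F] [Fintype F] (d : ℕ) :
    {A : F[X] | A.Monic ∧ A.natDegree < d}.Finite := by
  refine (finite_degree_lt F d).subset fun A hA => ?_
  rw [Set.mem_ofPred_eq, Polynomial.degree_eq_natDegree hA.1.ne_zero]
  exact_mod_cast hA.2

/-- The finite set of monic polynomials of degree less than `d`. -/
noncomputable def monicsLT (F : Type) [Field F] [Fintype F] (d : ℕ) : Finset F[X] :=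
  (finite_monic_natDegree_lt F d).toFinset

theorem mem_monicsLT {d : ℕ} {A : F[X]} : A ∈ monicsLT F d ↔ A.Monic ∧ A.natDegree < d := by
  simp [monicsLT]

theorem prod_X_sub_C_univ : ∏ c : F, (X - C c) = X ^ Fintype.card F - X := by
  have hq := Fintype.one_lt_card (α := F)
  have h := Polynomial.prod_multiset_X_sub_C_of_monic_of_roots_card_eq
    (p := (X ^ Fintype.card F - X : F[X]))
    (by
      apply Polynomial.monic_X_pow_sub
      rw [Polynomial.degree_X]; exact_mod_cast hq)
    (by rw [FiniteField.roots_X_pow_card_sub_X, FiniteField.X_pow_card_sub_X_natDegree_eq _ hq]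
        rfl)
  rw [FiniteField.roots_X_pow_card_sub_X] at h
  exact h

/-- The homogenized factorization `∏_{c ∈ F} (a - c w) = a ^ q - w ^ (q - 1) a`. -/
theorem prod_sub_smul {K : Type*} [Field K] [Algebra F K] (a : K[X]) (w : K) :
    ∏ c : F, (a - C (algebraMap F K c * w)) =
      a ^ Fintype.card F - C (w ^ (Fintype.card F - 1)) * a := by
  have hq := Fintype.one_lt_card (α := F)
  by_cases hw : w = 0
  · simp [hw, Nat.sub_ne_zero_of_lt hq, Finset.card_univ]
  · have h := congrArg (Polynomial.aeval (C w⁻¹ * a)) (prod_X_sub_C_univ (F := F))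
    simp only [map_prod, map_sub, map_pow, aeval_X, aeval_C] at h
    have h2 : ∏ c : F, (a - C (algebraMap F K c * w)) =
        ∏ c : F, (C w * (C w⁻¹ * a - algebraMap F K[X] c)) := by
      refine Finset.prod_congr rfl fun c _ => ?_
      rw [mul_sub, ← mul_assoc, ← C_mul, mul_inv_cancel₀ hw, IsScalarTower.algebraMap_apply F K K[X],
        Polynomial.algebraMap_eq, ← C_mul, mul_comm w]
      simp
    rw [h2, Finset.prod_mul_distrib, h, Finset.prod_const, Finset.card_univ]
    obtain ⟨r, hr⟩ : ∃ r, Fintype.card F = r + 1 := ⟨Fintype.card F - 1, by omega⟩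
    have hw' : C w * C w⁻¹ = 1 := by rw [← C_mul, mul_inv_cancel₀ hw, C_1]
    rw [mul_sub, ← mul_pow, ← mul_assoc, hw', one_mul, hr, Nat.add_sub_cancel, C_pow]
    linear_combination -(C w ^ r * a * hw')

/-- The `K`-span of the monomials `X ^ (q ^ i)`, that is, the `q`-linear polynomials. -/
noncomputable def qLinear (q : ℕ) (K : Type*) [Field K] : Submodule K K[X] :=
  Submodule.span K (Set.range fun i : ℕ => (X : K[X]) ^ q ^ i)

section
variable {K : Type*} [Field K] [Algebra F K]

theorem add_pow_card_pow (A : Type*) [CommRing A] [Algebra F A] (x y : A) (n : ℕ) :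
    (x + y) ^ Fintype.card F ^ n = x ^ Fintype.card F ^ n + y ^ Fintype.card F ^ n := by
  rcases subsingleton_or_nontrivial A with hA | hA
  · exact Subsingleton.elim _ _
  obtain ⟨p, hp⟩ := CharP.exists F
  obtain ⟨m, hpp, hm⟩ := FiniteField.card F p
  have := Fact.mk hpp
  have : CharP A p := charP_of_injective_algebraMap (algebraMap F A).injective p
  rw [hm, ← pow_mul, add_pow_char_pow]

theorem qLinear_pow {f : K[X]} (hf : f ∈ qLinear (Fintype.card F) K) :
    f ^ Fintype.card F ∈ qLinear (Fintype.card F) K := by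
  induction hf using Submodule.span_induction with
  | mem f h =>
    obtain ⟨i, rfl⟩ := h
    exact Submodule.subset_span ⟨i + 1, by simp [← pow_mul, pow_succ]⟩
  | zero => simp [Fintype.card_ne_zero]
  | add f g _ _ hf hg =>
    have := add_pow_card_pow (F := F) K[X] f g 1
    rw [pow_one] at this
    rw [this]; exact add_mem hf hg
  | smul a f _ hf => rw [_root_.smul_pow]; exact Submodule.smul_mem _ _ hf

/-- A `q`-linear polynomial is additive. -/
theorem qLinear_comp {f : K[X]} (hf : f ∈ qLinear (Fintype.card F) K) (a : K) :
    f.comp (X - C a) = f - C (f.eval a) := by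
  suffices h : f.comp (X + C (-a)) = f + C (f.eval (-a)) ∧ f.eval (-a) = - f.eval a by
    rw [sub_eq_add_neg, ← C_neg, h.1, h.2, C_neg, sub_eq_add_neg]
  induction hf using Submodule.span_induction with
  | mem f h =>
    obtain ⟨i, rfl⟩ := h
    refine ⟨by simpa using add_pow_card_pow (F := F) K[X] X (-C a) i, ?_⟩
    have := add_pow_card_pow (F := F) K a (-a) i
    simp only [add_neg_cancel] at this
    rw [zero_pow (pow_ne_zero _ Fintype.card_ne_zero)] at this
    simp only [eval_pow, eval_X]
    linear_combination -this
  | zero => simp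
  | add f g _ _ hf hg =>
    constructor
    · rw [add_comp, eval_add, hf.1, hg.1, C_add]; ring
    · rw [eval_add, eval_add, hf.2, hg.2]; ring
  | smul b f _ hf =>
    constructor
    · rw [smul_comp, hf.1, smul_add, eval_smul, smul_C]
    · rw [eval_smul, eval_smul, hf.2, smul_neg]

theorem qLinear_eval {f : K[X]} (hf : f ∈ qLinear (Fintype.card F) K) (c : F) (a : K) :
    f.eval (algebraMap F K c * a) = algebraMap F K c * f.eval a := by
  induction hf using Submodule.span_induction with
  | mem f h =>
    obtain ⟨i, rfl⟩ := h
    simp [mul_pow, ← map_pow, FiniteField.pow_card_pow]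
  | zero => simp
  | add f g _ _ hf hg => simp only [eval_add, hf, hg]; ring
  | smul b f _ hf => simp only [eval_smul, hf, smul_eq_mul]; ring

theorem qLinear_coeff {q : ℕ} {f : K[X]} (hf : f ∈ qLinear q K) {n : ℕ} (hn : ∀ i, n ≠ q ^ i) :
    f.coeff n = 0 := by
  induction hf using Submodule.span_induction with
  | mem f h =>
    obtain ⟨i, rfl⟩ := h
    simp [coeff_X_pow, hn i]
  | zero => simp
  | add f g _ _ hf hg => simp [hf, hg]
  | smul b f _ hf => simp [hf]

/-- The polynomial with simple roots the polynomials of degree less than `d` is `q`-linear: its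
root space grows by a line when `d` grows by one, and `e_{d+1} = e_d ^ q - e_d(T ^ d) ^ (q-1) e_d`. -/
theorem prod_polysLT_mem_qLinear (ι : F[X] →ₐ[F] K) (d : ℕ) :
    ∏ A ∈ polysLT F d, (X - C (ι A)) ∈ qLinear (Fintype.card F) K := by
  induction d with
  | zero =>
    have : polysLT F 0 = {0} := by
      ext A; simp [mem_polysLT, Polynomial.degree_eq_bot, Nat.WithBot.lt_zero_iff]
    rw [this]
    exact Submodule.subset_span ⟨0, by simp⟩
  | succ d ih =>
    set e := ∏ A ∈ polysLT F d, (X - C (ι A)) with he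
    have hsplit : ∏ A ∈ polysLT F (d + 1), (X - C (ι A)) =
        ∏ x ∈ (Finset.univ : Finset F) ×ˢ polysLT F d,
          (X - C (algebraMap F K x.1 * ι (X ^ d)) - C (ι x.2)) := by
      symm
      refine Finset.prod_bij' (fun x _ => x.2 + C x.1 * X ^ d)
        (fun A _ => (A.coeff d, A - C (A.coeff d) * X ^ d)) ?_ ?_ ?_ ?_ ?_
      · rintro ⟨c, A⟩ h
        simp only [Finset.mem_product, mem_polysLT] at h ⊢
        refine (degree_add_le _ _).trans_lt (max_lt (h.2.trans ?_)
          ((degree_C_mul_X_pow_le d c).trans_lt ?_)) <;> exact_mod_cast Nat.lt_succ_self d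
      · intro A h
        simp only [Finset.mem_product, Finset.mem_univ, true_and, mem_polysLT] at h ⊢
        rw [Polynomial.degree_lt_iff_coeff_zero] at h ⊢
        intro m hm
        rcases hm.eq_or_lt with rfl | hm
        · simp
        · simp [coeff_X_pow, hm.ne', h m hm]
      · rintro ⟨c, A⟩ h
        simp only [Finset.mem_product, mem_polysLT] at h
        have : A.coeff d = 0 := coeff_eq_zero_of_degree_lt h.2
        simp [this]
      · intro A h; simp
      · rintro ⟨c, A⟩ h
        have : ι (C c) = algebraMap F K c := ι.commutes c
        simp only [map_add, map_mul, this]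
        ring
    have hstep : ∏ A ∈ polysLT F (d + 1), (X - C (ι A)) =
        e ^ Fintype.card F - C (e.eval (ι (X ^ d)) ^ (Fintype.card F - 1)) * e := by
      rw [hsplit, Finset.prod_product, ← prod_sub_smul]
      refine Finset.prod_congr rfl fun c _ => ?_
      rw [← qLinear_eval ih, ← qLinear_comp (F := F) ih, he, Polynomial.prod_comp]
      simp
    rw [hstep]
    refine sub_mem (qLinear_pow ih) ?_
    rw [← smul_eq_C_mul]
    exact Submodule.smul_mem _ _ ih

open Classical in
/-- Grouping the nonzero polynomials of degree less than `d` into `Fˣ`-orbits. -/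
theorem prod_polysLT_eq (ι : F[X] →ₐ[F] K) (d : ℕ) :
    ∏ A ∈ polysLT F d, (X - C (ι A)) = X * expand K (Fintype.card F - 1)
      (∏ B ∈ monicsLT F d, (X - C (ι B ^ (Fintype.card F - 1)))) := by
  have hq := Fintype.one_lt_card (α := F)
  have horbit : ∀ b : K, ∏ c ∈ (Finset.univ : Finset F).erase 0, (X - C (algebraMap F K c * b)) =
      X ^ (Fintype.card F - 1) - C (b ^ (Fintype.card F - 1)) := by
    intro b
    have h := prod_sub_smul (F := F) (X : K[X]) b
    rw [← Finset.mul_prod_erase _ _ (Finset.mem_univ (0 : F))] at h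
    apply mul_left_cancel₀ (X_ne_zero (R := K))
    simp only [map_zero, zero_mul, sub_zero] at h
    rw [h, mul_sub, ← pow_succ', Nat.sub_add_cancel hq.le, mul_comm X (C _)]
  have h0 : (0 : F[X]) ∈ polysLT F d := by
    rw [mem_polysLT, degree_zero]; exact WithBot.bot_lt_coe _
  rw [← Finset.mul_prod_erase _ _ h0, map_prod]
  simp only [map_zero, sub_zero, map_sub, expand_X, expand_C]
  congr 1
  simp only [← horbit]
  rw [← Finset.prod_product']
  symm
  refine Finset.prod_bij' (fun x _ => C x.2 * x.1)
    (fun A _ => (C A.leadingCoeff⁻¹ * A, A.leadingCoeff)) ?_ ?_ ?_ ?_ ?_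
  · rintro ⟨B, c⟩ h
    simp only [Finset.mem_product, mem_monicsLT, Finset.mem_erase, Finset.mem_univ, and_true,
      mem_polysLT] at h ⊢
    refine ⟨mul_ne_zero (C_ne_zero.mpr h.2) h.1.1.ne_zero, ?_⟩
    rw [degree_C_mul h.2, degree_eq_natDegree h.1.1.ne_zero]
    exact_mod_cast h.1.2
  · intro A h
    simp only [Finset.mem_product, mem_monicsLT, Finset.mem_erase, Finset.mem_univ, and_true,
      mem_polysLT] at h ⊢
    have hl : A.leadingCoeff ≠ 0 := leadingCoeff_ne_zero.mpr h.1
    refine ⟨⟨?_, ?_⟩, hl⟩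
    · rw [mul_comm]; exact monic_mul_leadingCoeff_inv h.1
    · rw [natDegree_C_mul (inv_ne_zero hl)]
      rw [degree_eq_natDegree h.1] at h
      exact_mod_cast h.2
  · rintro ⟨B, c⟩ h
    simp only [Finset.mem_product, mem_monicsLT, Finset.mem_erase, Finset.mem_univ, and_true] at h
    have : (C c * B).leadingCoeff = c := by
      rw [leadingCoeff_mul, leadingCoeff_C, h.1.1.leadingCoeff, mul_one]
    simp only [this, ← mul_assoc, ← C_mul, inv_mul_cancel₀ h.2, C_1, one_mul]
  · intro A h
    simp only [Finset.mem_erase] at h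
    have hl : A.leadingCoeff ≠ 0 := leadingCoeff_ne_zero.mpr h.1
    simp only [← mul_assoc, ← C_mul, mul_inv_cancel₀ hl, C_1, one_mul]
  · rintro ⟨B, c⟩ h
    have : ι (C c) = algebraMap F K c := ι.commutes c
    simp only [map_mul, this]

/-- The reversed form of Vieta's formula. -/
theorem esymm_coeff {σ : Type*} [Fintype σ] (y : σ → K) (j : ℕ) :
    (∏ i, (1 + C (-y i) * X) : K[X]).coeff j =
      (-1) ^ j * MvPolynomial.aeval y (MvPolynomial.esymm σ ℤ j) := by
  classical
  rw [Finset.prod_one_add, finsetSum_coeff, MvPolynomial.esymm, map_sum, Finset.mul_sum,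
    Finset.powersetCard_eq_filter, Finset.sum_filter]
  refine Finset.sum_congr rfl fun t _ => ?_
  rw [Finset.prod_mul_distrib, Finset.prod_const, ← map_prod, coeff_C_mul_X_pow, Finset.prod_neg]
  split_ifs with h1 h2 h2
  · simp [h1]
  · exact absurd h1.symm h2
  · exact absurd h2.symm h1
  · rfl

/-- The elementary symmetric functions `e_j` with `2 ≤ j ≤ q` of the `(q-1)`-st powers of the
inverses of the monic polynomials of degree less than `d` vanish. -/
theorem esymm_monicsLT_eq_zero (ι : F[X] →ₐ[F] K) (hι : Function.Injective ι) (d j : ℕ)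
    (h2 : 2 ≤ j) (hj : j ≤ Fintype.card F) :
    MvPolynomial.aeval (fun B : monicsLT F d => (ι (B : F[X]))⁻¹ ^ (Fintype.card F - 1))
      (MvPolynomial.esymm (monicsLT F d) ℤ j) = 0 := by
  have hq := Fintype.one_lt_card (α := F)
  have hne : ∀ B : monicsLT F d, ι (B : F[X]) ^ (Fintype.card F - 1) ≠ 0 := fun B =>
    pow_ne_zero _ ((map_ne_zero_iff ι hι).mpr (mem_monicsLT.mp B.2).1.ne_zero)
  -- `1 + j (q - 1)` lies strictly between `q` and `q ^ 2`.
  have hpow : ∀ i, j * (Fintype.card F - 1) + 1 ≠ Fintype.card F ^ i := by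
    obtain ⟨r, hr⟩ : ∃ r, Fintype.card F = r + 1 := ⟨Fintype.card F - 1, by omega⟩
    rw [hr] at hq hj ⊢
    intro i h
    rw [Nat.add_sub_cancel] at h
    have hlo : (r + 1) ^ 1 < (r + 1) ^ i := by rw [← h]; nlinarith
    have hhi : (r + 1) ^ i < (r + 1) ^ 2 := by rw [← h]; nlinarith
    rw [Nat.pow_lt_pow_iff_right hq] at hlo hhi
    omega
  have h1 := qLinear_coeff (prod_polysLT_mem_qLinear ι d) hpow
  rw [prod_polysLT_eq, coeff_X_mul, coeff_expand_mul (by omega), ← Finset.prod_coe_sort] at h1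
  have h3 : ∏ B : monicsLT F d, (X - C (ι (B : F[X]) ^ (Fintype.card F - 1))) =
      C (∏ B : monicsLT F d, -(ι (B : F[X]) ^ (Fintype.card F - 1))) *
      ∏ B : monicsLT F d, (1 + C (-((ι (B : F[X]))⁻¹ ^ (Fintype.card F - 1))) * X) := by
    rw [map_prod, ← Finset.prod_mul_distrib]
    refine Finset.prod_congr rfl fun B _ => ?_
    rw [mul_add, ← mul_assoc, ← C_mul, neg_mul_neg, inv_pow, mul_inv_cancel₀ (hne B)]
    simp only [C_neg, C_1]; ring
  rw [h3, coeff_C_mul, esymm_coeff, mul_eq_zero, mul_eq_zero] at h1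
  rcases h1 with h1 | h1 | h1
  · obtain ⟨B, -, hB⟩ := Finset.prod_eq_zero_iff.mp h1
    exact absurd (neg_eq_zero.mp hB) (hne B)
  · exact absurd h1 (pow_ne_zero _ (by norm_num))
  · exact h1
end
end Carlitz

/-! ### The defect on the monoid algebra of polynomials -/

section Witt
variable {F : Type} [Field F]

/-- The lift of Frobenius on the monoid algebra `ℤ[F[X]]` of the multiplicative monoid `F[X]`,
raising every monoid element to the power `p`. -/
noncomputable def frobLift (F : Type) [Field F] (p : ℕ) :
    MonoidAlgebra ℤ F[X] →+* MonoidAlgebra ℤ F[X] :=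
  MonoidAlgebra.mapDomainRingHom ℤ (powMonoidHom p : F[X] →* F[X])

theorem frobLift_of (p : ℕ) (A : F[X]) :
    frobLift F p (MonoidAlgebra.of ℤ F[X] A) = MonoidAlgebra.of ℤ F[X] A ^ p := by
  rw [← map_pow]
  simp [frobLift]

/-- `f` has `p`-defect `c` along `ev` if `φ(f) = f ^ p + p a` with `ev a = c (ev f) ^ p`, where `φ`
is the lift of Frobenius. Writing the defect `ev a` relative to `(ev f) ^ p` makes it behave
like a logarithmic derivative. -/
def HasDefect {K : Type*} [Field K] (p : ℕ) (ev : MonoidAlgebra ℤ F[X] →+* K)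
    (f : MonoidAlgebra ℤ F[X]) (c : K) : Prop :=
  ∃ a, frobLift F p f = f ^ p + p * a ∧ ev a = c * ev f ^ p

variable {K : Type*} [Field K] {p : ℕ} {ev : MonoidAlgebra ℤ F[X] →+* K}

theorem HasDefect.mul (hp : (p : K) = 0) {f g : MonoidAlgebra ℤ F[X]} {c e : K}
    (hf : HasDefect p ev f c) (hg : HasDefect p ev g e) : HasDefect p ev (f * g) (c + e) := by
  obtain ⟨a, ha, ha'⟩ := hf
  obtain ⟨b, hb, hb'⟩ := hg
  refine ⟨a * g ^ p + f ^ p * b + p * (a * b), by rw [map_mul, ha, hb]; ring, ?_⟩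
  simp only [map_add, map_mul, map_pow, map_natCast, hp, ha', hb']
  ring

theorem HasDefect.one : HasDefect p ev 1 0 :=
  ⟨0, by simp, by simp⟩

theorem HasDefect.prod (hpK : (p : K) = 0) {ι : Type*} (s : Finset ι)
    (f : ι → MonoidAlgebra ℤ F[X]) (c : ι → K) (h : ∀ i ∈ s, HasDefect p ev (f i) (c i)) :
    HasDefect p ev (∏ i ∈ s, f i) (∑ i ∈ s, c i) := by
  classical
  induction s using Finset.induction_on with
  | empty => simpa using HasDefect.one
  | insert i s hi ih =>
    rw [Finset.prod_insert hi, Finset.sum_insert hi]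
    exact (h i (Finset.mem_insert_self i s)).mul hpK
      (ih fun j hj => h j (Finset.mem_insert_of_mem hj))

/-- The coefficientwise integer division in `gpNum` is exact. -/
theorem C_mul_gpNum (hp : p.Prime) :
    (p : ℤ[X]) * gpNum p = (1 - X ^ p) - (1 - X) ^ p := by
  obtain ⟨r, hr⟩ := exists_add_pow_prime_eq hp (1 - X : ℤ[X]) X
  have h : (1 - X ^ p) - (1 - X) ^ p = C (p : ℤ) * ((1 - X) * X * r : ℤ[X]) := by
    rw [sub_add_cancel, one_pow] at hr
    rw [map_natCast]
    linear_combination hr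
  rw [gpNum, h]
  ext n
  rw [← map_natCast (C : ℤ →+* ℤ[X]), coeff_C_mul, coeff_C_mul, Polynomial.sum_def,
    finsetSum_coeff]
  simp only [coeff_C_mul_X_pow]
  have hp0 : (p : ℤ) ≠ 0 := by exact_mod_cast hp.ne_zero
  rw [Finset.sum_ite_eq]
  split_ifs with hn
  · rw [coeff_C_mul, Int.mul_ediv_cancel_left _ hp0]
  · rw [← coeff_C_mul, notMem_support_iff.mp hn, mul_zero]

/-- The defect of an Euler factor is a value of `G_p`. -/
theorem hasDefect_one_sub (hp : p.Prime) (A : F[X]) (ℓ : ℕ)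
    (h1 : ev (MonoidAlgebra.of ℤ F[X] A ^ ℓ) ≠ 1) :
    HasDefect p ev (1 - MonoidAlgebra.of ℤ F[X] A ^ ℓ)
      (Gp p (ev (MonoidAlgebra.of ℤ F[X] A ^ ℓ))) := by
  set u := MonoidAlgebra.of ℤ F[X] A ^ ℓ with hu
  refine ⟨aeval u (gpNum p), ?_, ?_⟩
  · have h := congrArg (aeval u) (C_mul_gpNum hp)
    simp only [map_mul, map_natCast, map_sub, map_one, map_pow, aeval_X] at h
    rw [h, map_sub, map_one, hu, map_pow, frobLift_of]
    ring
  · have hne : (1 - ev u) ^ p ≠ 0 := pow_ne_zero _ (sub_ne_zero.mpr h1.symm)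
    rw [Gp, map_sub, map_one, div_mul_cancel₀ _ hne]
    exact (Polynomial.map_aeval_eq_aeval_map (φ := RingHom.id ℤ) (ψ := ev)
      (RingHom.ext_int _ _) (gpNum p) u).trans (by simp)

/-- The truncated zeta sum has defect zero: its defect is the symmetric function of
`exists_psum_defect` evaluated at the `A ^ (-(q - 1))`, whose `e_2, …, e_q` vanish; the hypothesis
`ℓ p ≤ q` keeps all the elementary symmetric functions that matter in this range. -/
theorem hasDefect_zeta [Fintype F] [Algebra F K] (ι : F[X] →ₐ[F] K) (hι : Function.Injective ι)
    (hev : ∀ A, ev (MonoidAlgebra.of ℤ F[X] A) = (ι A)⁻¹ ^ (Fintype.card F - 1))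
    (hp : p.Prime) {ℓ : ℕ} (hl : 1 ≤ ℓ) (hlp : ℓ * p ≤ Fintype.card F) (d : ℕ) :
    HasDefect p ev (∑ A ∈ monicsLT F d, MonoidAlgebra.of ℤ F[X] A ^ ℓ) 0 := by
  obtain ⟨a, ha, ha0⟩ := exists_psum_defect
    (fun B : monicsLT F d => (ι (B : F[X]))⁻¹ ^ (Fintype.card F - 1)) hp hl
    (fun j h2 hj => esymm_monicsLT_eq_zero ι hι d j h2 (hj.trans hlp))
  let h : MvPolynomial (monicsLT F d) ℤ →ₐ[ℤ] MonoidAlgebra ℤ F[X] :=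
    MvPolynomial.aeval fun B => MonoidAlgebra.of ℤ F[X] (B : F[X])
  have hps : ∀ m, h (MvPolynomial.psum _ ℤ m) =
      ∑ A ∈ monicsLT F d, MonoidAlgebra.of ℤ F[X] A ^ m := by
    intro m
    rw [MvPolynomial.psum, map_sum]
    simp only [h, map_pow, MvPolynomial.aeval_X]
    exact Finset.sum_coe_sort (monicsLT F d) fun A => MonoidAlgebra.of ℤ F[X] A ^ m
  refine ⟨h a, ?_, ?_⟩
  · have h1 := congrArg h ha
    rw [map_add, map_mul, map_pow, map_natCast, hps, hps] at h1
    rw [← h1, map_sum]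
    refine Finset.sum_congr rfl fun A _ => ?_
    rw [map_pow, frobLift_of, ← pow_mul, mul_comm]
  · rw [zero_mul, ← ha0]
    have : (ev.toIntAlgHom.comp h) = MvPolynomial.aeval
        (fun B : monicsLT F d => (ι (B : F[X]))⁻¹ ^ (Fintype.card F - 1)) := by
      apply MvPolynomial.algHom_ext
      intro B
      change ev (h (MvPolynomial.X B)) = _
      simp only [h, MvPolynomial.aeval_X]
      exact hev B
    rw [← this]; rfl

/-- The ideal of `ℤ[F[X]]` generated by the polynomials of degree at least `d`. -/
noncomputable def wtIdeal (F : Type) [Field F] (d : ℕ) : Ideal (MonoidAlgebra ℤ F[X]) :=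
  Ideal.span (MonoidAlgebra.of ℤ F[X] '' {B | d ≤ B.natDegree})

theorem of_pow_mem_wtIdeal {d ℓ : ℕ} {A : F[X]} (h : d ≤ A.natDegree) (hl : 1 ≤ ℓ) :
    MonoidAlgebra.of ℤ F[X] A ^ ℓ ∈ wtIdeal F d := by
  have h' : MonoidAlgebra.of ℤ F[X] A ∈ wtIdeal F d :=
    Ideal.subset_span (Set.mem_image_of_mem _ h)
  exact Ideal.pow_mem_of_mem _ h' _ hl

/-- If `f` is `1` modulo degree at least `d`, so are `φ(f)` and `f ^ p`, and hence their difference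
divided by `p` lies in the same ideal, which is spanned by monomials. -/
theorem defect_mem_wtIdeal (hp : p.Prime) {d : ℕ} {f a : MonoidAlgebra ℤ F[X]}
    (hf : f - 1 ∈ wtIdeal F d) (h : frobLift F p f = f ^ p + p * a) : a ∈ wtIdeal F d := by
  have hle : wtIdeal F d ≤ (wtIdeal F d).comap (frobLift F p) := by
    rw [wtIdeal, Ideal.span_le]
    rintro _ ⟨B, hB, rfl⟩
    change frobLift F p _ ∈ wtIdeal F d
    rw [frobLift_of]
    exact of_pow_mem_wtIdeal hB hp.one_le
  have h1 : frobLift F p f - 1 ∈ wtIdeal F d := by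
    have := hle hf
    rwa [Ideal.mem_comap, map_sub, map_one] at this
  have h2 : f ^ p - 1 ∈ wtIdeal F d := by
    obtain ⟨r, hr⟩ := sub_dvd_pow_sub_pow f 1 p
    rw [one_pow] at hr
    rw [hr]; exact Ideal.mul_mem_right _ _ hf
  have h3 : (p : MonoidAlgebra ℤ F[X]) * a ∈ wtIdeal F d := by
    have := sub_mem h1 h2
    rwa [h, show f ^ p + p * a - 1 - (f ^ p - 1) = p * a by ring] at this
  -- `p` is a nonzero integer, so `a` and `p a` have the same support.
  rw [wtIdeal, MonoidAlgebra.mem_ideal_span_of_image] at h3 ⊢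
  intro m hm
  apply h3
  rw [Finsupp.mem_support_iff] at hm ⊢
  rw [← nsmul_eq_mul, MonoidAlgebra.coeff_smul, Finsupp.smul_apply]
  simpa [hp.ne_zero] using hm

/-- Modulo terms of degree at least `d`, multiplying the truncated zeta sum by the Euler factors
`1 - [P] ^ ℓ` with `P ∈ S` leaves the sum over the set `Z` of those `A` divisible by no `P ∈ S`. -/
theorem euler_mod_wtIdeal [Fintype F] {ℓ : ℕ} (hl : 1 ≤ ℓ) (d : ℕ) (S : Finset F[X])
    (hS : ∀ P ∈ S, P.Monic ∧ Irreducible P) (Z : Finset F[X])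
    (hZ : ∀ A, A ∈ Z ↔ A ∈ monicsLT F d ∧ ∀ P ∈ S, ¬ P ∣ A) :
    (∑ A ∈ monicsLT F d, MonoidAlgebra.of ℤ F[X] A ^ ℓ) *
      ∏ P ∈ S, (1 - MonoidAlgebra.of ℤ F[X] P ^ ℓ) -
      ∑ A ∈ Z, MonoidAlgebra.of ℤ F[X] A ^ ℓ ∈ wtIdeal F d := by
  classical
  induction S using Finset.induction_on generalizing Z with
  | empty =>
    have : Z = monicsLT F d := by ext A; simp [hZ]
    simp [this]
  | insert P S hP ih =>
    obtain ⟨hPm, hPi⟩ := hS P (Finset.mem_insert_self P S)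
    have hS' : ∀ Q ∈ S, Q.Monic ∧ Irreducible Q := fun Q hQ => hS Q (Finset.mem_insert_of_mem hQ)
    set Z' := (monicsLT F d).filter fun A => ∀ Q ∈ S, ¬ Q ∣ A with hZ'
    have ih' := ih hS' Z' (fun A => by simp [hZ'])
    have hcop : ∀ Q ∈ S, ∀ A, Q ∣ A * P ↔ Q ∣ A := by
      intro Q hQ A
      refine ⟨fun h => ?_, fun h => h.mul_right P⟩
      refine ((hS' Q hQ).2.prime.dvd_or_dvd h).resolve_right fun h' => hP ?_
      have := Polynomial.eq_of_monic_of_associated (hS' Q hQ).1 hPm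
        ((hS' Q hQ).2.associated_of_dvd hPi h')
      exact this ▸ hQ
    -- Multiplication by `P` carries the `A` with `deg (A P) < d` onto the multiples of `P`.
    have hbij : ∑ A ∈ Z' with (A * P).natDegree < d, MonoidAlgebra.of ℤ F[X] (A * P) ^ ℓ =
        ∑ A ∈ Z' with P ∣ A, MonoidAlgebra.of ℤ F[X] A ^ ℓ := by
      refine Finset.sum_bij (fun A _ => A * P) ?_ ?_ ?_ ?_
      · intro A hA
        simp only [hZ', Finset.mem_filter, mem_monicsLT] at hA ⊢
        exact ⟨⟨⟨hA.1.1.1.mul hPm, hA.2⟩, fun Q hQ h => hA.1.2 Q hQ ((hcop Q hQ A).mp h)⟩,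
          dvd_mul_left P A⟩
      · intro A _ B _ h
        exact mul_right_cancel₀ hPm.ne_zero h
      · intro B hB
        simp only [hZ', Finset.mem_filter, mem_monicsLT] at hB
        obtain ⟨⟨⟨hBm, hBd⟩, hBS⟩, A, rfl⟩ := hB
        rw [mul_comm] at hBm hBd
        have hAm : A.Monic := hPm.of_mul_monic_right hBm
        refine ⟨A, ?_, mul_comm _ _⟩
        simp only [hZ', Finset.mem_filter, mem_monicsLT]
        refine ⟨⟨⟨hAm, ?_⟩, fun Q hQ h => hBS Q hQ (h.mul_left P)⟩, hBd⟩
        rw [hAm.natDegree_mul hPm] at hBd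
        omega
      · intro A _; rfl
    have hrest : ∑ A ∈ Z' with ¬ (A * P).natDegree < d, MonoidAlgebra.of ℤ F[X] (A * P) ^ ℓ
        ∈ wtIdeal F d := by
      refine Ideal.sum_mem _ fun A hA => of_pow_mem_wtIdeal ?_ hl
      exact not_lt.mp (Finset.mem_filter.mp hA).2
    have hZZ : Z = Z'.filter fun A => ¬ P ∣ A := by
      ext A
      simp only [hZ, hZ', Finset.mem_filter, Finset.forall_mem_insert]
      tauto
    have hsplit := Finset.sum_filter_add_sum_filter_not Z' (fun A => P ∣ A)
      (fun A => MonoidAlgebra.of ℤ F[X] A ^ ℓ)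
    have hsplit2 := Finset.sum_filter_add_sum_filter_not Z' (fun A => (A * P).natDegree < d)
      (fun A => MonoidAlgebra.of ℤ F[X] (A * P) ^ ℓ)
    have hmul : ∑ A ∈ Z', MonoidAlgebra.of ℤ F[X] (A * P) ^ ℓ =
        (∑ A ∈ Z', MonoidAlgebra.of ℤ F[X] A ^ ℓ) * MonoidAlgebra.of ℤ F[X] P ^ ℓ := by
      rw [Finset.sum_mul]
      exact Finset.sum_congr rfl fun A _ => by rw [map_mul, mul_pow]
    rw [Finset.prod_insert hP, hZZ]
    have hgoal := sub_mem (Ideal.mul_mem_right (1 - MonoidAlgebra.of ℤ F[X] P ^ ℓ) _ ih') hrest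
    convert hgoal using 1
    rw [hbij] at hsplit2
    linear_combination hsplit2 + hmul - hsplit

/-- The truncated Euler product: a monic polynomial of degree less than `d` that is divisible by no
prime of degree less than `d` is `1`. -/
theorem zeta_mul_prod_sub_one_mem [Fintype F] {ℓ : ℕ} (hl : 1 ≤ ℓ) {d : ℕ} (hd : 1 ≤ d)
    (S : Finset F[X]) (hS : ∀ P, P ∈ S ↔ (P.Monic ∧ Irreducible P) ∧ P.natDegree < d) :
    (∑ A ∈ monicsLT F d, MonoidAlgebra.of ℤ F[X] A ^ ℓ) *
      ∏ P ∈ S, (1 - MonoidAlgebra.of ℤ F[X] P ^ ℓ) - 1 ∈ wtIdeal F d := by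
  have h := euler_mod_wtIdeal hl d S (fun P hP => ((hS P).mp hP).1) {1} (fun A => ?_)
  · rw [Finset.sum_singleton, map_one, one_pow] at h
    exact h
  rw [Finset.mem_singleton, mem_monicsLT]
  constructor
  · rintro rfl
    exact ⟨⟨monic_one, by rw [natDegree_one]; exact hd⟩, fun P hP h =>
      ((hS P).mp hP).1.2.not_isUnit (isUnit_of_dvd_one h)⟩
  · rintro ⟨⟨hA, hAd⟩, h⟩
    by_contra hne
    have hu : ¬ IsUnit A := fun hu => hne (hA.eq_one_of_isUnit hu)
    obtain ⟨P, hPm, hPi, hPA⟩ := Polynomial.exists_monic_irreducible_factor A hu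
    exact h P ((hS P).mpr ⟨⟨hPm, hPi⟩, (natDegree_le_of_dvd hPA hA.ne_zero).trans_lt hAd⟩) hPA
end Witt

/-! ### Evaluation in the Laurent series in the inverse of the variable -/

section Laurent
variable {F : Type} [Field F]

theorem polyEmb_monomial (n : ℕ) (c : F) :
    polyEmb F (monomial n c) = HahnSeries.single (-(n : ℤ)) c := by
  rw [polyEmb, coe_eval₂RingHom, eval₂_monomial, TT, HahnSeries.single_pow, HahnSeries.C_apply,
    HahnSeries.single_mul_single]
  simp

theorem coeff_polyEmb (A : F[X]) (n : ℕ) : (polyEmb F A).coeff (-(n : ℤ)) = A.coeff n := by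
  induction A using Polynomial.induction_on' with
  | add f g hf hg => simp [hf, hg]
  | monomial m c =>
    rw [polyEmb_monomial, coeff_monomial]
    by_cases h : m = n
    · simp [h]
    · rw [HahnSeries.coeff_single_of_ne (by simpa using Ne.symm h), if_neg h]

/-- Equality holds, but only this inequality is needed to bound inverses. -/
theorem exp_le_valued_polyEmb {A : F[X]} (hA : A ≠ 0) :
    WithZero.exp (A.natDegree : ℤ) ≤ Valued.v (polyEmb F A) := by
  by_contra! h
  rw [show (A.natDegree : ℤ) = -(-(A.natDegree : ℤ) + 1) + 1 by ring, WithZero.exp_add,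
    WithZero.lt_mul_exp_iff_le WithZero.exp_ne_zero,
    LaurentSeries.valuation_le_iff_coeff_lt_eq_zero] at h
  have h1 := h (-(A.natDegree : ℤ)) (by omega)
  rw [coeff_polyEmb, coeff_natDegree, leadingCoeff_eq_zero] at h1
  exact hA h1

/-- The embedding of `F[X]` into the Laurent series in `T⁻¹`, as a map of `F`-algebras. -/
noncomputable def polyEmbAlg (F : Type) [Field F] : F[X] →ₐ[F] LaurentSeries F :=
  { polyEmb F with
    commutes' := fun c => by
      change polyEmb F (C c) = _
      rw [polyEmb, coe_eval₂RingHom, eval₂_C, HahnSeries.algebraMap_apply']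
      simp }

theorem polyEmbAlg_apply (A : F[X]) : polyEmbAlg F A = polyEmb F A := rfl

theorem polyEmbAlg_injective : Function.Injective (polyEmbAlg F) := by
  intro A B h
  ext n
  rw [← coeff_polyEmb, ← coeff_polyEmb, ← polyEmbAlg_apply, h, polyEmbAlg_apply]

theorem natCast_ringChar_laurentSeries : ((ringChar F : ℕ) : LaurentSeries F) = 0 := by
  rw [← map_natCast (algebraMap F (LaurentSeries F)), CharP.cast_eq_zero, map_zero]

variable [Fintype F]

theorem card_sub_one_ne_zero : Fintype.card F - 1 ≠ 0 :=
  Nat.sub_ne_zero_of_lt Fintype.one_lt_card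

/-- The evaluation `[A] ↦ A ^ (-(q - 1))` of the monoid algebra in the Laurent series, with
`[0] ↦ 0`. -/
noncomputable def evInv (F : Type) [Field F] [Fintype F] :
    MonoidAlgebra ℤ F[X] →+* LaurentSeries F :=
  (MonoidAlgebra.lift ℤ (LaurentSeries F) F[X]
    { toFun := fun A => (polyEmbAlg F A)⁻¹ ^ (Fintype.card F - 1)
      map_one' := by simp
      map_mul' := fun A B => by rw [map_mul, mul_inv, mul_pow] }).toRingHom

theorem evInv_of (A : F[X]) :
    evInv F (MonoidAlgebra.of ℤ F[X] A) = (polyEmbAlg F A)⁻¹ ^ (Fintype.card F - 1) :=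
  MonoidAlgebra.lift_of _ _

theorem valued_evInv_of_le {d : ℕ} {A : F[X]} (h : d ≤ A.natDegree) :
    Valued.v (evInv F (MonoidAlgebra.of ℤ F[X] A)) ≤ WithZero.exp (-(d : ℤ)) := by
  rw [evInv_of, polyEmbAlg_apply, map_pow, map_inv₀]
  rcases eq_or_ne A 0 with rfl | hA
  · simp [card_sub_one_ne_zero]
  · have h1 : (Valued.v (polyEmb F A))⁻¹ ≤ WithZero.exp (-(d : ℤ)) := by
      rw [WithZero.exp_neg]
      apply inv_anti₀ (by simp)
      refine le_trans ?_ (exp_le_valued_polyEmb hA)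
      simpa using h
    refine (pow_le_of_le_one zero_le (h1.trans ?_) card_sub_one_ne_zero).trans h1
    rw [← WithZero.exp_zero, WithZero.exp_le_exp]
    omega

theorem valued_evInv_le_one (x : MonoidAlgebra ℤ F[X]) : Valued.v (evInv F x) ≤ 1 := by
  induction x using MonoidAlgebra.induction_on with
  | of A => simpa using valued_evInv_of_le (Nat.zero_le A.natDegree)
  | add f g hf hg => rw [map_add]; exact Valuation.map_add_le _ hf hg
  | smul r f hf =>
    rw [zsmul_eq_mul, map_mul, map_intCast, map_mul]
    refine mul_le_one' ?_ hf
    induction r using Int.induction_on with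
    | zero => simp
    | succ i hi => push_cast at *; exact Valuation.map_add_le _ hi (by simp)
    | pred i hi => push_cast at *; exact Valuation.map_sub_le _ hi (by simp)

/-- `evInv` carries `wtIdeal F d` into the ball of radius `exp (-d)`. -/
theorem valued_evInv_of_mem_wtIdeal {d : ℕ} {x : MonoidAlgebra ℤ F[X]} (hx : x ∈ wtIdeal F d) :
    Valued.v (evInv F x) ≤ WithZero.exp (-(d : ℤ)) := by
  induction hx using Submodule.span_induction with
  | mem x h =>
    obtain ⟨B, hB, rfl⟩ := h
    exact valued_evInv_of_le hB
  | zero => simp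
  | add x y _ _ hx hy => rw [map_add]; exact Valuation.map_add_le _ hx hy
  | smul a x _ hx =>
    rw [smul_eq_mul, map_mul, map_mul]
    exact (mul_le_mul' (valued_evInv_le_one a) hx).trans_eq (one_mul _)

theorem ringChar_prime : (ringChar F).Prime :=
  CharP.char_is_prime F _

/-- The sum over the primes of degree less than `d` is the defect of `Z_d ∏ (1 - [P] ^ ℓ)`,
where `Z_d` is the truncated zeta sum; this product is congruent to `1` modulo terms of degree at least `d`. -/
theorem valued_sum_Gp_le {ℓ : ℕ} (h1 : 1 ≤ ℓ) (h2 : ℓ * ringChar F ≤ Fintype.card F)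
    {d : ℕ} (hd : 1 ≤ d) (S : Finset F[X])
    (hS : ∀ P, P ∈ S ↔ (P.Monic ∧ Irreducible P) ∧ P.natDegree < d) :
    Valued.v (∑ P ∈ S, Gp (ringChar F)
      (((polyEmb F P) ^ ((Fintype.card F - 1) * ℓ))⁻¹)) ≤ WithZero.exp (-(d : ℤ)) := by
  have hp := ringChar_prime (F := F)
  have hlt : ∀ {n : ℕ}, 1 ≤ n → WithZero.exp (-(n : ℤ)) < 1 := by
    intro n hn
    rw [← WithZero.exp_zero, WithZero.exp_lt_exp]
    omega
  have hu : ∀ P, evInv F (MonoidAlgebra.of ℤ F[X] P ^ ℓ) =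
      ((polyEmb F P) ^ ((Fintype.card F - 1) * ℓ))⁻¹ := by
    intro P
    rw [map_pow, evInv_of, polyEmbAlg_apply, inv_pow, inv_pow, ← pow_mul]
  have hne : ∀ P ∈ S, evInv F (MonoidAlgebra.of ℤ F[X] P ^ ℓ) ≠ 1 := by
    intro P hP h
    have h3 := valued_evInv_of_mem_wtIdeal (of_pow_mem_wtIdeal
      (Irreducible.natDegree_pos ((hS P).mp hP).1.2) h1)
    rw [h, map_one] at h3
    exact absurd h3 (not_le.mpr (hlt le_rfl))
  have hdef := (hasDefect_zeta (polyEmbAlg F) polyEmbAlg_injective evInv_of hp h1 h2 d).mul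
    natCast_ringChar_laurentSeries
    (HasDefect.prod natCast_ringChar_laurentSeries S _ _ fun P hP =>
      hasDefect_one_sub hp P ℓ (hne P hP))
  have hmem := zeta_mul_prod_sub_one_mem h1 hd S hS
  obtain ⟨a, ha, hev⟩ := hdef
  have hv := valued_evInv_of_mem_wtIdeal (defect_mem_wtIdeal hp hmem ha)
  have hunit := (valued_evInv_of_mem_wtIdeal hmem).trans_lt (hlt hd)
  -- The product evaluates to a unit of norm `1`, so the relative defect is as small as `ev a`.
  rw [map_sub, map_one] at hunit
  have hone := Valuation.map_one_add_of_lt _ hunit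
  rw [add_sub_cancel] at hone
  rw [hev, map_mul, map_pow, hone, one_pow, mul_one, zero_add] at hv
  simpa only [hu] using hv

end Laurent

/-! ### The sum over all primes -/

/-- Let `q` be a power of a prime `p` (a finite field `F` with `q = |F|`, `p = char F`)
and let `k = (q-1)ℓ` with `1 ≤ ℓ ≤ q/p`.  Then `∑_{P ∈ 𝒫₁} G_p(1/Pᵏ) = 0` in
`K̂ = F_q((T⁻¹))`. -/
theorem thakur_sum_Gp_vanishes (F : Type) [Field F] [Fintype F]
    (ℓ : ℕ) (h1 : 1 ≤ ℓ) (h2 : ℓ * ringChar F ≤ Fintype.card F) :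
    ∑' P : {P : Polynomial F // P.Monic ∧ Irreducible P},
      Gp (ringChar F) (((polyEmb F (P : Polynomial F)) ^ ((Fintype.card F - 1) * ℓ))⁻¹)
      = 0 := by
  classical
  set g : {P : F[X] // P.Monic ∧ Irreducible P} → LaurentSeries F := fun P =>
    Gp (ringChar F) (((polyEmb F (P : F[X])) ^ ((Fintype.card F - 1) * ℓ))⁻¹) with hg
  -- The primes of degree less than `d`; these sets exhaust the index type.
  let S : ℕ → Finset {P : F[X] // P.Monic ∧ Irreducible P} := fun d =>
    (monicsLT F d).subtype fun P => P.Monic ∧ Irreducible P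
  have hmemS : ∀ d P, P ∈ S d ↔ (P : F[X]).natDegree < d := fun d P => by
    simp only [S, Finset.mem_subtype, mem_monicsLT]
    exact and_iff_right P.2.1
  have hbound : ∀ d, 1 ≤ d → Valued.v (∑ P ∈ S d, g P) ≤ WithZero.exp (-(d : ℤ)) := by
    intro d hd
    have h := valued_sum_Gp_le h1 h2 hd ((S d).map (Function.Embedding.subtype _)) (fun P => by
      simp only [Finset.mem_map, hmemS]
      constructor
      · rintro ⟨Q, hQ, rfl⟩
        exact ⟨Q.2, hQ⟩
      · rintro ⟨hP, hPd⟩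
        exact ⟨⟨P, hP⟩, hPd, rfl⟩)
    rwa [Finset.sum_map] at h
  have hlim : Filter.Tendsto (fun d => ∑ P ∈ S d, g P) Filter.atTop (nhds 0) := by
    rw [(Valued.hasBasis_nhds_zero (LaurentSeries F) _).tendsto_right_iff]
    intro γ _
    have hγ : MonoidWithZeroHom.ValueGroup₀.embedding γ.val ≠ 0 := by
      rw [_root_.map_ne_zero]
      exact γ.ne_zero
    filter_upwards [Filter.eventually_ge_atTop 1, Filter.eventually_gt_atTop
      (-WithZero.log (MonoidWithZeroHom.ValueGroup₀.embedding γ.val)).toNat] with d hd hγd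
    rw [Valuation.restrict_lt_iff_lt_embedding]
    refine (hbound d hd).trans_lt ?_
    rw [← WithZero.lt_log_iff_exp_lt hγ]
    omega
  have hS : Filter.Tendsto S Filter.atTop Filter.atTop := by
    refine Filter.tendsto_atTop_finset_of_monotone (fun d e h P hP => ?_) (fun P => ?_)
    · rw [hmemS] at hP ⊢
      exact hP.trans_le h
    · exact ⟨_, (hmemS _ P).mpr (Nat.lt_succ_self _)⟩
  -- If the family is summable, its sum is the limit of these partial sums; otherwise the sum has
  -- the default value `0`.
  by_cases hs : Summable g
  · exact tendsto_nhds_unique (hs.hasSum.comp hS) hlim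
  · exact tsum_eq_zero_of_not_summable hs
end
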